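/- arXiv:1710.03635 — 2 statements merged into one kernel-verified Lean document; each statement's English description precedes it below -/
import Mathlib

section
/- Let T be a complete discrete valuation ring whose residue field has characteristic 0, and let K be its fraction field. Then for every finite field extension E_P of Frac(T⟦x⟧), there exists a finite field extension E of the rational function field K(x) such that E ⊗_{K(x)} Frac(T⟦x⟧) is isomorphic to E_P as a Frac(T⟦x⟧)-algebra. -/
section
open Polynomial


theorem isPrecomplete_of_finite {R M : Type*} [CommRing R] (I : Ideal R) [IsPrecomplete I R]
    [AddCommGroup M] [Module R M] [Module.Finite R M] : IsPrecomplete I M := by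
  rw [← AdicCompletion.of_surjective_iff]
  intro y
  obtain ⟨z, rfl⟩ := AdicCompletion.ofTensorProduct_surjective_of_finite I M y
  induction z using TensorProduct.induction_on with
  | zero => exact ⟨0, by simp⟩
  | tmul a m =>
    obtain ⟨r, rfl⟩ := AdicCompletion.of_surjective I R a
    refine ⟨r • m, ?_⟩
    simp [AdicCompletion.ofTensorProduct_tmul]
    rfl
  | add a b ha hb =>
    obtain ⟨u, hu⟩ := ha
    obtain ⟨v, hv⟩ := hb
    exact ⟨u + v, by rw [map_add, map_add, hu, hv]⟩

theorem isAdicComplete_alg_of_finite {R S : Type*} [CommRing R] [IsNoetherianRing R] (I : Ideal R)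
    [IsAdicComplete I R] [CommRing S] [Algebra R S] [Module.Finite R S] :
    IsAdicComplete (I.map (algebraMap R S)) S := by
  have h1 : IsPrecomplete I S := isPrecomplete_of_finite I
  have h2 : IsHausdorff I S := IsHausdorff.of_le_jacobson _ _ (IsAdicComplete.le_jacobson_bot I)
  have h3 : IsPrecomplete (I.map (algebraMap R S)) S := IsPrecomplete.map_algebraMap_iff.mpr h1
  have h4 : IsHausdorff (I.map (algebraMap R S)) S := IsHausdorff.map_algebraMap_iff.mpr h2
  exact { toIsHausdorff := h4, toIsPrecomplete := h3 }

theorem exists_fixpoint {S : Type*} [CommRing S] (x : S) [IsAdicComplete (Ideal.span {x}) S]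
    (Θ : S[X]) : ∃ w : S, w = x * Θ.eval w := by
  let c : ℕ → S := fun n => Nat.rec 0 (fun _ w => x * Θ.eval w) n
  have hc : ∀ n, c (n+1) = x * Θ.eval (c n) := fun n => rfl
  have hd : ∀ n, x ^ n ∣ c (n+1) - c n := by
    intro n
    induction n with
    | zero => simp
    | succ n ih =>
      rw [hc (n+1), hc n, ← mul_sub, pow_succ']
      exact mul_dvd_mul_left _ (ih.trans (sub_dvd_eval_sub _ _ _))
  have hd2 : ∀ m n, m ≤ n → x ^ m ∣ c n - c m := by
    intro m n h
    induction n, h using Nat.le_induction with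
    | base => simp
    | succ n h ih =>
      have := dvd_add ((pow_dvd_pow x h).trans (hd n)) ih
      simpa using this
  have key : ∀ {m} {a b : S}, a ≡ b [SMOD (Ideal.span {x} ^ m • ⊤ : Submodule S S)] ↔ x ^ m ∣ a - b := by
    intro m a b
    rw [SModEq.sub_mem, smul_eq_mul, Ideal.mul_top, Ideal.span_singleton_pow,
      Ideal.mem_span_singleton]
  obtain ⟨w, hw⟩ := IsPrecomplete.prec (I := Ideal.span {x}) (M := S) inferInstance (f := c)
    (by intro m n h; exact key.mpr (by rw [← dvd_neg, neg_sub]; exact hd2 m n h))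
  refine ⟨w, ?_⟩
  rw [IsHausdorff.eq_iff_smodEq (I := Ideal.span {x})]
  intro n
  rw [key]
  have h1 := key.mp (hw n)
  have h2 : x ^ n ∣ x * Θ.eval (c n) - x * Θ.eval w := by
    rw [← mul_sub]
    exact (h1.trans (sub_dvd_eval_sub _ _ _)).mul_left _
  have h3 := hd n
  rw [hc] at h3
  rw [← dvd_neg]
  have e2 : (c n - w) + (x * Θ.eval (c n) - c n) - (x * Θ.eval (c n) - x * Θ.eval w) = -(w - x * Θ.eval w) := by ring
  rw [← e2]
  exact dvd_sub (dvd_add h1 h3) h2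

theorem perturb {R Fr L : Type*} [CommRing R] [IsDomain R] [IsNoetherianRing R] (x : R)
    [IsAdicComplete (Ideal.span {x}) R] [Field Fr] [Algebra R Fr]
    [Field L] [Algebra Fr L] [Algebra R L] [IsScalarTower R Fr L]
    (hinj : Function.Injective (algebraMap R L))
    (α : L) (f : R[X]) (hf : f.Monic) (hα : aeval α f = 0)
    (hgen : Algebra.adjoin Fr {α} = ⊤)
    (τ Q : R) (hQ : Q ≠ 0) (ρ : L) (S : Subalgebra R L) (hS : S = Algebra.adjoin R {α})
    (ρ' V : S) (Φ : S[X])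
    (hρ : algebraMap R L Q * ρ = (ρ' : L))
    (hΦ : ∀ z : L, algebraMap R L Q * aeval (α + ρ * z) f = algebraMap R L τ * aeval z Φ)
    (hΦ0 : Φ.coeff 0 = 0) (hΦ1 : V * Φ.coeff 1 = algebraMap R _ (Q ^ 2)) (h : R[X]) :
    ∃ α' : L, aeval α' (f + C (τ * (x * Q) ^ 3) * h) = 0 ∧ Algebra.adjoin Fr {α'} = ⊤ := by
  have hint : IsIntegral R α := ⟨f, hf, hα⟩
  have hfin : Module.Finite R S := by
    rw [hS]; exact Module.Finite.iff_fg.mpr hint.fg_adjoin_singleton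
  have hc : IsAdicComplete (Ideal.span {algebraMap R S x}) S := by
    have := isAdicComplete_alg_of_finite (S := S) (Ideal.span {x})
    rwa [Ideal.map_span, Set.image_singleton] at this
  let a : S := ⟨α, hS ▸ Algebra.self_mem_adjoin_singleton R α⟩
  let X0 : S := algebraMap R S x
  let Q0 : S := algebraMap R S Q
  let Γ : S[X] := (C V * Φ).divX.divX
  have hΓ : C V * Φ = X * (C (Q0 ^ 2)) + X * X * Γ := by
    have h1 := X_mul_divX_add (C V * Φ)
    have h2 := X_mul_divX_add (C V * Φ).divX
    rw [← h1, ← h2]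
    simp only [coeff_C_mul, coeff_divX, hΦ0, mul_zero, map_zero, add_zero, zero_add, hΦ1, Γ, Q0,
      map_pow]
    ring
  let Θ : S[X] := - (X ^ 2 * Γ.comp (C (X0 * Q0 ^ 2) * X) +
    C (X0 * V) * (h.map (algebraMap R S)).comp (C a + C (ρ' * X0 * Q0) * X))
  obtain ⟨w, hw⟩ := exists_fixpoint X0 Θ
  let z : L := algebraMap R L x * algebraMap R L Q ^ 2 * (w : L)
  have hV : (V : L) ≠ 0 := by
    intro h0
    have : V = 0 := Subtype.ext h0
    rw [this, zero_mul] at hΦ1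
    have h1 : algebraMap R L (Q ^ 2) = 0 := by
      have := congrArg (fun s : S => (s : L)) hΦ1
      simpa using this.symm
    rw [← map_zero (algebraMap R L)] at h1
    exact hQ (pow_eq_zero_iff (by norm_num) |>.mp (hinj h1))
  have hQL : algebraMap R L Q ≠ 0 := fun h0 => hQ (hinj (by rw [h0, map_zero]))
  have hX0 : (X0 : L) = algebraMap R L x := rfl
  have hQ0 : (Q0 : L) = algebraMap R L Q := rfl
  have hz : α + ρ * z = ((a + ρ' * X0 * Q0 * w : S) : L) := by
    simp only [z, Subalgebra.coe_add, Subalgebra.coe_mul, ← hρ, hX0, hQ0]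
    simp only [a]
    ring
  have hzS : z = ((X0 * Q0 ^ 2 * w : S) : L) := by
    simp [z, hX0, hQ0]
  -- the value of h at the new point
  have hh : aeval (α + ρ * z) h = (((h.map (algebraMap R S)).eval (a + ρ' * X0 * Q0 * w) : S) : L) := by
    rw [hz, eval_map_algebraMap]
    exact (aeval_algebraMap_apply L (a + ρ' * X0 * Q0 * w) h)
  set H : S := (h.map (algebraMap R S)).eval (a + ρ' * X0 * Q0 * w) with hH
  set G : S := Γ.eval (X0 * Q0 ^ 2 * w) with hG
  have hw' : w = - (X0 * (w ^ 2 * G + X0 * V * H)) := by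
    conv_lhs => rw [hw]
    simp [Θ, hG, hH, eval_comp, mul_assoc]
    ring
  have hVΦ : V * Φ.eval (X0 * Q0 ^ 2 * w) =
      X0 * Q0 ^ 4 * w + X0 ^ 2 * Q0 ^ 4 * w ^ 2 * G := by
    have := congrArg (eval (X0 * Q0 ^ 2 * w)) hΓ
    simp only [eval_mul, eval_C, eval_add, eval_X] at this
    rw [this, hG]; ring
  have hΦz : aeval z Φ = ((Φ.eval (X0 * Q0 ^ 2 * w) : S) : L) := by
    rw [hzS]
    exact aeval_algebraMap_apply_eq_algebraMap_eval (A := L) (X0 * Q0 ^ 2 * w) Φ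
  refine ⟨α + ρ * z, ?_, ?_⟩
  · have hmul : (V : L) * algebraMap R L Q * aeval (α + ρ * z) (f + C (τ * (x * Q) ^ 3) * h) = 0 := by
      rw [map_add, map_mul, aeval_C, mul_add, mul_assoc, hΦ z, hΦz, hh]
      have e : V * Φ.eval (X0 * Q0 ^ 2 * w) + V * Q0 * ((X0 * Q0) ^ 3 * H) = 0 := by
        rw [hVΦ]
        linear_combination (X0 * Q0 ^ 4) * hw'
      have e2 := congrArg (fun s : S => (s : L)) e
      simp only [Subalgebra.coe_add, Subalgebra.coe_mul, Subalgebra.coe_pow, hX0, hQ0,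
        Subalgebra.coe_zero] at e2
      simp only [map_mul, map_pow]
      linear_combination (algebraMap R L τ) * e2
    rcases mul_eq_zero.mp hmul with h1 | h1
    · exact absurd h1 (mul_ne_zero hV hQL)
    · exact h1
  · -- Nakayama
    rw [hz]
    set a' : S := a + ρ' * X0 * Q0 * w with ha'
    have htop : Algebra.adjoin R {a} = ⊤ := by
      rw [eq_top_iff]
      intro y _
      have hy : (y : L) ∈ Algebra.adjoin R {α} := hS ▸ y.2
      rw [Algebra.adjoin_singleton_eq_range_aeval] at hy ⊢
      obtain ⟨g, hg⟩ := hy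
      refine ⟨g, Subtype.ext ?_⟩
      rw [← hg]
      exact (aeval_algebraMap_apply L a g).symm
    have hN : (⊤ : Submodule R S) ≤ Subalgebra.toSubmodule (Algebra.adjoin R {a'}) := by
      refine Submodule.le_of_le_smul_of_le_jacobson_bot (I := Ideal.span {x})
        Module.Finite.fg_top (IsAdicComplete.le_jacobson_bot _) ?_
      intro y _
      have hy : y ∈ Algebra.adjoin R {a} := htop ▸ Algebra.mem_top
      rw [Algebra.adjoin_singleton_eq_range_aeval] at hy
      obtain ⟨g, rfl⟩ := hy
      have hd : X0 ∣ aeval a g - aeval a' g := by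
        have h1 : a - a' ∣ aeval a g - aeval a' g := by
          simp only [aeval_def, ← eval_map]
          exact sub_dvd_eval_sub _ _ _
        refine Dvd.dvd.trans ?_ h1
        exact ⟨- (ρ' * Q0 * w), by rw [ha']; ring⟩
      obtain ⟨u, hu⟩ := hd
      have : (aeval a : R[X] →ₐ[R] S) g = aeval a' g + x • u := by
        rw [Algebra.smul_def]; linear_combination hu
      change aeval a g ∈ _
      rw [this]
      refine Submodule.add_mem_sup ?_ ?_
      · exact Subalgebra.mem_toSubmodule _ |>.mpr (aeval_mem_adjoin_singleton R a')
      · exact Submodule.smul_mem_smul (Ideal.mem_span_singleton_self x) trivial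
    have ha : a ∈ Algebra.adjoin R {a'} := hN trivial
    rw [Algebra.adjoin_singleton_eq_range_aeval] at ha
    obtain ⟨g, hg⟩ := ha
    have hg' : aeval (a' : L) g = α := by
      have := congrArg (fun s : S => (s : L)) hg
      simp only [a] at this
      rw [← this]
      exact (aeval_algebraMap_apply L a' g)
    rw [eq_top_iff, ← hgen]
    refine Algebra.adjoin_le ?_
    rw [Set.singleton_subset_iff, ← hg', ← aeval_map_algebraMap Fr]
    exact aeval_mem_adjoin_singleton Fr _


theorem exists_shift {B ι : Type*} [CommRing B] [Finite ι] (q : ι → Ideal B)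
    (hq : ∀ i, (q i).IsMaximal) (hnat : ∀ (n : ℕ), n ≠ 0 → ∀ i, (n : B) ∉ q i)
    (p : ι → B[X]) (hp : ∀ i, (p i).Monic) (b : ι → B) :
    ∃ c : ι → ℕ, ∀ i j, i ≠ j → (p j).eval (b i + (c i : B) - (c j : B)) ∉ q i := by
  classical
  have := Fintype.ofFinite ι
  let d : ι → ℕ := fun i => (Fintype.equivFin ι i : ℕ)
  have hd : ∀ i j, i ≠ j → d i ≠ d j := fun i j h h' =>
    h ((Fintype.equivFin ι).injective (Fin.ext h'))
  have hfin : ∀ i j, i ≠ j → Set.Finite {m : ℕ | (p j).eval (b i + ((m * d i : ℕ) : B) - ((m * d j : ℕ) : B)) ∈ q i} := by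
    intro i j hij
    have := hq i
    let k := B ⧸ q i
    let π := Ideal.Quotient.mk (q i)
    let G : k[X] := ((p j).map π)
    have hG : G ≠ 0 := ((hp j).map π).ne_zero
    have hroots : Set.Finite {y : k | G.IsRoot y} := finite_setOfPred_isRoot hG
    refine (hroots.preimage (f := fun m : ℕ => π (b i + ((m * d i : ℕ) : B) - ((m * d j : ℕ) : B))) ?_).subset ?_
    · intro m _ n _ hmn
      simp only at hmn
      rw [Ideal.Quotient.mk_eq_mk_iff_sub_mem] at hmn
      by_contra hne
      have e : b i + ((m * d i : ℕ) : B) - ((m * d j : ℕ) : B) - (b i + ((n * d i : ℕ) : B) - ((n * d j : ℕ) : B))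
        = ((m : B) - n) * ((d i : B) - d j) := by push_cast; ring
      rw [e] at hmn
      have key : ∀ u v : ℕ, u ≠ v → (u : B) - v ∉ q i := by
        intro u v huv hmem
        rcases lt_or_gt_of_ne huv with h | h
        · apply hnat (v - u) (by omega) i
          rw [Nat.cast_sub h.le]
          rw [← neg_sub]; exact neg_mem hmem
        · apply hnat (u - v) (by omega) i
          rwa [Nat.cast_sub h.le]
      rcases (hq i).isPrime.mem_or_mem hmn with h | h
      · exact key m n hne h
      · exact key _ _ (hd i j hij) h
    · intro m hm
      change eval (π _) (map π (p j)) = 0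
      rw [eval_map_apply]
      exact Ideal.Quotient.eq_zero_iff_mem.mpr hm
  have hU : Set.Finite (⋃ (x : {x : ι × ι // x.1 ≠ x.2}), {m : ℕ | (p x.1.2).eval (b x.1.1 + ((m * d x.1.1 : ℕ) : B) - ((m * d x.1.2 : ℕ) : B)) ∈ q x.1.1}) :=
    Set.finite_iUnion fun x => hfin x.1.1 x.1.2 x.2
  obtain ⟨m, hm⟩ := hU.exists_notMem
  refine ⟨fun i => m * d i, fun i j hij hmem => hm ?_⟩
  exact Set.mem_iUnion.mpr ⟨⟨(i, j), hij⟩, hmem⟩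

theorem exists_adjust {B : Type*} [CommRing B] [IsDedekindDomain B] (q : Ideal B)
    (hq : q.IsMaximal) (hq0 : q ≠ ⊥) (p : B[X]) (b : B) (hb : p.eval b ∈ q)
    (hb' : (derivative p).eval b ∉ q) : ∃ b' : B, b' - b ∈ q ∧ p.eval b' ∉ q ^ 2 := by
  by_cases h : p.eval b ∈ q ^ 2
  swap
  · exact ⟨b, by simp, h⟩
  obtain ⟨π, hπ, hπ2⟩ : ∃ π ∈ q, π ∉ q ^ 2 := by
    have : ¬ q ≤ q ^ 2 := fun hle =>
      absurd (Ideal.pow_right_strictAnti q hq0 hq.ne_top (show 1 < 2 by norm_num)) (by simp [not_lt_of_ge, hle])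
    exact Set.not_subset.mp this
  refine ⟨b + π, by simpa using hπ, fun hmem => ?_⟩
  obtain ⟨k, hk⟩ := Polynomial.binomExpansion p b π
  rw [hk] at hmem
  have h1 : k * π ^ 2 ∈ q ^ 2 := Ideal.mul_mem_left _ _ (Ideal.pow_mem_pow hπ 2)
  have h2 : (derivative p).eval b * π ∈ q ^ 2 := by
    have := sub_mem (sub_mem hmem h1) h
    convert this using 1; ring
  rcases Ideal.IsPrime.mul_mem_pow q h2 with h3 | h3
  · exact hb' h3
  · exact hπ2 h3

theorem exists_taylor {B : Type*} [CommRing B] (p : B[X]) (α π σ : B) (hπ : p.eval α = π) :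
    ∃ P : B[X], P.coeff 0 = 1 ∧ P.coeff 1 = (derivative p).eval α * σ ∧
      C π * P = p.comp (C α + C (π * σ) * X) := by
  set Tt := taylor α p with hT
  have h0 : Tt.coeff 0 = π := by rw [hT, taylor_coeff_zero, hπ]
  have h1 : Tt.coeff 1 = (derivative p).eval α := by rw [hT, taylor_coeff_one]
  have e1 := X_mul_divX_add Tt
  have e2 := X_mul_divX_add Tt.divX
  rw [coeff_divX, zero_add, h1] at e2
  rw [h0] at e1
  set D := Tt.divX.divX
  refine ⟨1 + X * (C ((derivative p).eval α * σ) + X * (C (σ * (π * σ)) * D.comp (C (π * σ) * X))), ?_, ?_, ?_⟩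
  · simp
  · rw [coeff_add, coeff_X_mul]; simp [coeff_one]
  · have e3 : p.comp (C α + C (π * σ) * X) = Tt.comp (C (π * σ) * X) := by
      rw [hT, taylor_apply, comp_assoc]; simp [add_comm]
    rw [e3, ← e1, ← e2]
    simp only [add_comp, mul_comp, X_comp, C_comp, map_mul]
    ring


theorem core_step1 {A0 A B ι : Type*} [CommRing A0] [CommRing A] [CommRing B] [IsDedekindDomain B]
    [Algebra A0 A] [Algebra A B] [Algebra A0 B] [IsScalarTower A0 A B] [Finite ι]
    (q : ι → Ideal B) (hq : ∀ i, (q i).IsMaximal) (hinj : Function.Injective q)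
    (hq0 : ∀ i, q i ≠ ⊥) (hall : ∀ M : Ideal B, M.IsMaximal → ∃ i, M = q i)
    (hnat : ∀ (n : ℕ), n ≠ 0 → ∀ i, (n : B) ∉ q i)
    (b : ι → B) (p : ι → A0[X]) (hp : ∀ i, (p i).Monic)
    (h1 : ∀ i, aeval (b i) (p i) ∈ q i) (h2 : ∀ i, aeval (b i) (derivative (p i)) ∉ q i)
    (h3 : ∀ i, ∀ y : B, ∃ g : A[X], y - aeval (b i) g ∈ q i) :
    ∃ (α : B) (p' : ι → A0[X]), (∀ i, (p' i).Monic) ∧ (∀ i, (p' i).natDegree = (p i).natDegree) ∧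
      (∀ i, Ideal.span {aeval α (p' i)} = q i) ∧ (∀ i, aeval α (derivative (p' i)) ∉ q i) ∧
      (∀ i, ∀ y : B, ∃ g : A[X], y - aeval α g ∈ q i) := by
  classical
  have := Fintype.ofFinite ι
  -- congruence lemma
  have cong : ∀ (i : ι) (f : B[X]) (u v : B), u - v ∈ q i → f.eval u - f.eval v ∈ q i := by
    intro i f u v h
    exact Ideal.mem_of_dvd _ (sub_dvd_eval_sub u v f) h
  obtain ⟨c, hc⟩ := exists_shift q hq hnat (fun i => (p i).map (algebraMap A0 B))
    (fun i => (hp i).map _) b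
  let p' : ι → A0[X] := fun j => (p j).comp (X - C (c j : A0))
  have hp'e : ∀ j (z : B), ((p' j).map (algebraMap A0 B)).eval z = ((p j).map (algebraMap A0 B)).eval (z - (c j : B)) := by
    intro j z
    simp [p', Polynomial.map_comp, eval_comp]
  have hp'd : ∀ j (z : B), (derivative ((p' j).map (algebraMap A0 B))).eval z = (derivative ((p j).map (algebraMap A0 B))).eval (z - (c j : B)) := by
    intro j z
    simp [p', Polynomial.map_comp, eval_comp, derivative_comp]
  have hadj : ∀ i, ∃ b' : B, b' - (b i + (c i : B)) ∈ q i ∧ ((p' i).map (algebraMap A0 B)).eval b' ∉ q i ^ 2 := by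
    intro i
    apply exists_adjust (q i) (hq i) (hq0 i)
    · rw [hp'e, add_sub_cancel_right]
      have := h1 i
      rwa [← eval_map_algebraMap] at this
    · rw [hp'd, add_sub_cancel_right]
      have := h2 i
      rwa [← eval_map_algebraMap, ← derivative_map] at this
  choose b' hb' hb2 using hadj
  obtain ⟨α, hα⟩ := IsDedekindDomain.exists_forall_sub_mem_ideal (s := Finset.univ) q (fun _ => 2)
    (fun i _ => Ideal.prime_of_isPrime (hq0 i) (hq i).isPrime) (fun i _ j _ hij h => hij (hinj h))
    (fun i => b' i)
  simp only [Finset.mem_univ, forall_const] at hα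
  have hα1 : ∀ i, α - (b i + (c i : B)) ∈ q i := by
    intro i
    have h := add_mem (Ideal.pow_le_self two_ne_zero (hα i)) (hb' i)
    convert h using 1; ring
  refine ⟨α, p', ?_, ?_, ?_, ?_, ?_⟩
  · intro i
    exact (hp i).comp_X_sub_C _
  · intro i
    have e : p' i = taylor (-(c i : A0)) (p i) := by
      rw [taylor_apply]; simp [p', sub_eq_add_neg]
    rw [e, natDegree_taylor]
  · intro i
    rw [← eval_map_algebraMap]
    set f := (p' i).map (algebraMap A0 B) with hf
    have m1 : f.eval α ∈ q i := by
      have h := cong i f _ _ (hα1 i)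
      have h' : f.eval (b i + (c i : B)) ∈ q i := by
        rw [hf, hp'e, add_sub_cancel_right]
        have := h1 i
        rwa [← eval_map_algebraMap] at this
      simpa using add_mem h h'
    have m2 : f.eval α ∉ q i ^ 2 := by
      intro hm
      refine hb2 i ?_
      rw [← hf]
      have h : f.eval α - f.eval (b' i) ∈ q i ^ 2 :=
        Ideal.mem_of_dvd _ (sub_dvd_eval_sub α (b' i) f) (hα i)
      have h' := sub_mem hm h
      rwa [sub_sub_cancel] at h'
    have m3 : ∀ j, j ≠ i → f.eval α ∉ q j := by
      intro j hij hm
      apply hc j i hij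
      have h := cong j f _ _ (hα1 j)
      have h' := sub_mem hm h
      rw [sub_sub_cancel, hf, hp'e] at h'
      exact h'
    obtain ⟨J, hJ⟩ := Ideal.dvd_iff_le.mpr ((Ideal.span_singleton_le_iff_mem _).mpr m1)
    by_cases hJt : J = ⊤
    · rw [hJ, hJt, Ideal.mul_top]
    exfalso
    obtain ⟨M, hM, hJM⟩ := Ideal.exists_le_maximal J hJt
    obtain ⟨j, rfl⟩ := hall M hM
    have hmem : f.eval α ∈ q i * J := by rw [← hJ]; exact Ideal.mem_span_singleton_self _
    by_cases hij : j = i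
    · subst hij
      have hle : q j * J ≤ q j * q j := Ideal.mul_mono_right hJM
      exact m2 (by rw [pow_two]; exact hle hmem)
    · have hle : q i * J ≤ J := Ideal.mul_le_right
      exact m3 j hij (hJM (hle hmem))
  · intro i hm
    apply h2 i
    rw [← eval_map_algebraMap, ← derivative_map] at hm ⊢
    have h := cong i (derivative ((p' i).map (algebraMap A0 B))) _ _ (hα1 i)
    have h' := sub_mem hm h
    rw [sub_sub_cancel, hp'd, add_sub_cancel_right] at h'
    exact h'
  · intro i y
    obtain ⟨g, hg⟩ := h3 i y
    refine ⟨g.comp (X - C (c i : A)), ?_⟩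
    have h := cong i ((g.comp (X - C (c i : A))).map (algebraMap A B)) _ _ (hα1 i)
    rw [eval_map_algebraMap, eval_map_algebraMap] at h
    have e : aeval (b i + (c i : B)) (g.comp (X - C (c i : A))) = aeval (b i) g := by
      rw [aeval_comp]; simp
    rw [e] at h
    have := sub_mem hg h
    convert this using 1; ring


theorem core_adjoin {A B ι : Type*} [CommRing A] [IsLocalRing A] [CommRing B]
    [Algebra A B] [Module.Finite A B] [Fintype ι] (t : A)
    (ht : IsLocalRing.maximalIdeal A = Ideal.span {t}) (α : B) (π : ι → B) (e : ι → ℕ)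
    (hπ : ∀ i, π i ∈ Algebra.adjoin A {α}) (u : B)
    (hprod : ∏ i, π i ^ e i = algebraMap A B t * u)
    (h : ∀ i, ∀ y : B, ∃ s ∈ Algebra.adjoin A {α}, ∃ w, y = s + π i * w) :
    Algebra.adjoin A {α} = ⊤ := by
  set S := Algebra.adjoin A {α}
  let G : Submonoid B :=
    { carrier := {P | P ∈ S ∧ ∀ y : B, ∃ s ∈ S, ∃ w, y = s + P * w}
      one_mem' := ⟨one_mem _, fun y => ⟨0, zero_mem _, y, by simp⟩⟩
      mul_mem' := by
        rintro P P' ⟨hP, h⟩ ⟨hP', h'⟩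
        refine ⟨mul_mem hP hP', fun y => ?_⟩
        obtain ⟨s, hs, w, rfl⟩ := h y
        obtain ⟨s', hs', w', rfl⟩ := h' w
        exact ⟨s + P * s', add_mem hs (mul_mem hP hs'), w', by ring⟩ }
  have hG : ∏ i, π i ^ e i ∈ G := prod_mem fun i _ => pow_mem (show π i ∈ G from ⟨hπ i, h i⟩) _
  rw [hprod] at hG
  have key : (⊤ : Submodule A B) ≤ Subalgebra.toSubmodule S := by
    refine Submodule.le_of_le_smul_of_le_jacobson_bot (I := IsLocalRing.maximalIdeal A)
      (Module.finite_def.mp inferInstance) (IsLocalRing.maximalIdeal_le_jacobson _) ?_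
    intro y _
    obtain ⟨s, hs, w, rfl⟩ := hG.2 y
    refine Submodule.add_mem_sup hs ?_
    rw [mul_assoc, ← Algebra.smul_def]
    refine Submodule.smul_mem_smul ?_ trivial
    rw [ht]; exact Ideal.mem_span_singleton_self _
  exact eq_top_iff.mpr fun y _ => key (Submodule.mem_top : y ∈ _)

theorem coeff_one_prod_pow {B ι : Type*} [CommRing B] (s : Finset ι) (P : ι → B[X]) (e : ι → ℕ)
    (h0 : ∀ i, (P i).coeff 0 = 1) :
    (∏ i ∈ s, P i ^ e i).coeff 0 = 1 ∧
    (∏ i ∈ s, P i ^ e i).coeff 1 = ∑ i ∈ s, (e i : B) * (P i).coeff 1 := by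
  classical
  have hpow : ∀ i (n : ℕ), (P i ^ n).coeff 0 = 1 ∧ (P i ^ n).coeff 1 = n * (P i).coeff 1 := by
    intro i n
    induction n with
    | zero => simp [coeff_one]
    | succ n ih =>
      rw [pow_succ, mul_coeff_zero, mul_coeff_one, ih.1, ih.2, h0]
      refine ⟨by simp, by push_cast; ring⟩
  induction s using Finset.induction_on with
  | empty => simp [coeff_one]
  | insert a s ha ih =>
    rw [Finset.prod_insert ha, Finset.sum_insert ha, mul_coeff_zero, mul_coeff_one, ih.1, ih.2,
      (hpow a _).1, (hpow a _).2]
    refine ⟨by simp, by ring⟩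

theorem core {A0 A B ι : Type*} [CommRing A0] [CommRing A] [IsLocalRing A] [CommRing B]
    [IsDedekindDomain B]
    [Algebra A0 A] [Algebra A B] [Algebra A0 B] [IsScalarTower A0 A B] [Module.Finite A B]
    [Fintype ι] (t : A)
    (ht : IsLocalRing.maximalIdeal A = Ideal.span {t})
    (q : ι → Ideal B) (hq : ∀ i, (q i).IsMaximal) (hinj : Function.Injective q)
    (hq0 : ∀ i, q i ≠ ⊥) (hall : ∀ M : Ideal B, M.IsMaximal → ∃ i, M = q i)
    (hnat : ∀ (n : ℕ), n ≠ 0 → ∀ i, (n : B) ∉ q i)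
    (e : ι → ℕ) (he : ∀ i, e i ≠ 0) (hprod : Ideal.span {algebraMap A B t} = ∏ i, q i ^ e i)
    (N : ℕ) (hN : ∀ α : B, ∃ f0 : A[X], f0.Monic ∧ f0.natDegree = N ∧ aeval α f0 = 0)
    (b : ι → B) (p : ι → A0[X]) (hp : ∀ i, (p i).Monic)
    (h1 : ∀ i, aeval (b i) (p i) ∈ q i) (h2 : ∀ i, aeval (b i) (derivative (p i)) ∉ q i)
    (h3 : ∀ i, ∀ y : B, ∃ g : A[X], y - aeval (b i) g ∈ q i)
    (hdeg : ∑ i, e i * (p i).natDegree = N) :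
    ∃ (α : B) (Q : A0[X]) (g : A[X]) (ρ : B) (φ : B[X]), Algebra.adjoin A {α} = ⊤ ∧
      Q.Monic ∧ Q.natDegree = N ∧ g.degree < N ∧
      C (algebraMap A B t) * φ =
        ((Q.map (algebraMap A0 A) - C t * g).map (algebraMap A B)).comp (C α + C ρ * X) ∧
      φ.coeff 0 = 0 ∧ IsUnit (φ.coeff 1) := by
  classical
  obtain ⟨α, p, hp, hpd, hsp, h2, h3⟩ := core_step1 q hq hinj hq0 hall hnat b p hp h1 h2 h3
  simp only [← hpd] at hdeg
  set π : ι → B := fun i => aeval α (p i) with hπ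
  have hspan : Ideal.span {algebraMap A B t} = Ideal.span {∏ i, π i ^ e i} := by
    rw [hprod, ← Ideal.prod_span_singleton]
    refine Finset.prod_congr rfl fun i _ => ?_
    rw [← Ideal.span_singleton_pow, hsp]
  obtain ⟨u, hu⟩ := Ideal.span_singleton_eq_span_singleton.mp hspan
  have hmemS : ∀ i, π i ∈ Algebra.adjoin A {α} := by
    intro i
    have : π i = aeval α ((p i).map (algebraMap A0 A)) := by simp [hπ]
    rw [this]; exact aeval_mem_adjoin_singleton A α
  have hadj : Algebra.adjoin A {α} = ⊤ := by
    refine core_adjoin t ht α π e hmemS u hu.symm ?_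
    intro i y
    obtain ⟨g, hg⟩ := h3 i y
    rw [← hsp i, Ideal.mem_span_singleton] at hg
    obtain ⟨w, hw⟩ := hg
    exact ⟨aeval α g, aeval_mem_adjoin_singleton A α, w, by rw [hπ]; simp only; rw [← hw]; ring⟩
  obtain ⟨g, hgd, hg⟩ : ∃ g : A[X], g.degree < N ∧ aeval α g = (u : B) := by
    have : (u : B) ∈ Algebra.adjoin A {α} := by rw [hadj]; trivial
    rw [Algebra.adjoin_singleton_eq_range_aeval] at this
    obtain ⟨g0, hg0⟩ := this
    obtain ⟨f0, hf0, hf0N, hf0α⟩ := hN α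
    refine ⟨g0 %ₘ f0, ?_, ?_⟩
    · rw [← hf0N, ← degree_eq_natDegree hf0.ne_zero]
      exact degree_modByMonic_lt _ hf0
    · have h := congrArg (aeval α) (modByMonic_add_div g0 f0)
      rw [map_add, map_mul, hf0α, zero_mul, add_zero] at h
      rw [h]; exact hg0
  set σ : ι → B := fun i => ∏ j ∈ Finset.univ.erase i, π j with hσ
  set ρ : B := ∏ i, π i with hρ
  have hρσ : ∀ i, π i * σ i = ρ := fun i => Finset.mul_prod_erase _ _ (Finset.mem_univ i)
  have hT := fun i => exists_taylor ((p i).map (algebraMap A0 B)) α (π i) (σ i)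
    (by rw [eval_map_algebraMap])
  choose P hP0 hP1 hPc using hT
  simp only [hρσ] at hPc
  have hcp := coeff_one_prod_pow Finset.univ P e hP0
  have hl : ∀ r : A[X], (r.map (algebraMap A B)).comp (C α + C ρ * X) =
     (r.map (algebraMap A B)).comp (C α + C ρ * X) := fun _ => rfl
  have hg1 : ∃ w, ((g.map (algebraMap A B)).comp (C α + C ρ * X)).coeff 1 = ρ * w := by
    refine ⟨(derivative (g.map (algebraMap A B))).eval α, ?_⟩
    have h := coeff_derivative ((g.map (algebraMap A B)).comp (C α + C ρ * X)) 0
    simp only [Nat.cast_zero, zero_add, mul_one] at h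
    rw [← h, coeff_zero_eq_eval_zero, derivative_comp]
    simp [eval_comp]
  obtain ⟨w, hw⟩ := hg1
  refine ⟨α, ∏ i, p i ^ e i, g, ρ, C (u : B) * ∏ i, P i ^ e i - (g.map (algebraMap A B)).comp (C α + C ρ * X),
    hadj, monic_prod_of_monic _ _ fun i _ => (hp i).pow _, ?_, hgd, ?_, ?_, ?_⟩
  · rw [natDegree_prod_of_monic _ _ (fun i _ => (hp i).pow _), ← hdeg]
    exact Finset.sum_congr rfl fun i _ => (hp i).natDegree_pow _
  · rw [mul_sub, ← mul_assoc, ← C_mul, hu, map_prod]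
    simp only [map_pow]
    rw [← Finset.prod_mul_distrib]
    simp only [← mul_pow, hPc]
    simp only [Polynomial.map_sub, Polynomial.map_mul, sub_comp, mul_comp, map_C, C_comp]
    congr 1
    rw [Polynomial.map_map, ← IsScalarTower.algebraMap_eq, Polynomial.map_prod, prod_comp]
    simp [Polynomial.map_pow, pow_comp]
  · rw [coeff_sub, coeff_C_mul, hcp.1, coeff_zero_eq_eval_zero, eval_comp]
    simp [hg, eval_map_algebraMap]
  · rw [coeff_sub, coeff_C_mul, hcp.2, hw]
    by_contra hnu
    obtain ⟨M, hM, hmem⟩ := exists_max_ideal_of_mem_nonunits hnu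
    obtain ⟨i, rfl⟩ := hall M hM
    have hprime := (hq i).isPrime
    have hπi : π i ∈ q i := by rw [← hsp i]; exact Ideal.mem_span_singleton_self _
    have hρi : ρ ∈ q i := by rw [← hρσ i]; exact Ideal.mul_mem_right _ _ hπi
    have hσj : ∀ j, j ≠ i → σ j ∈ q i := by
      intro j hj
      exact Ideal.mem_of_dvd _ (Finset.dvd_prod_of_mem π (Finset.mem_erase.mpr ⟨hj.symm, Finset.mem_univ i⟩)) hπi
    have hσi : σ i ∉ q i := by
      intro hm
      obtain ⟨j, hj, hjm⟩ := (Ideal.IsPrime.prod_mem_iff).mp hm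
      have hle : q j ≤ q i := by
        rw [← hsp j, Ideal.span_singleton_le_iff_mem]; exact hjm
      exact (Finset.mem_erase.mp hj).1 (hinj ((hq j).eq_of_le (hq i).ne_top hle))
    have m1 : (u : B) * ∑ j, (e j : B) * (P j).coeff 1 ∈ q i := by
      have := add_mem hmem (Ideal.mul_mem_right w _ hρi)
      rwa [sub_add_cancel] at this
    have m2 : ∑ j, (e j : B) * (P j).coeff 1 ∈ q i :=
      (hprime.mem_or_mem m1).resolve_left fun h => hprime.ne_top (Ideal.eq_top_of_isUnit_mem _ h u.isUnit)
    rw [← Finset.add_sum_erase _ _ (Finset.mem_univ i)] at m2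
    have m3 : ∑ j ∈ Finset.univ.erase i, (e j : B) * (P j).coeff 1 ∈ q i := by
      refine sum_mem fun j hj => ?_
      rw [hP1]
      exact Ideal.mul_mem_left _ _ (Ideal.mul_mem_left _ _ (hσj j (Finset.mem_erase.mp hj).1))
    have m4 := (Submodule.add_mem_iff_left _ m3).mp m2
    rcases hprime.mem_or_mem m4 with h | h
    · exact hnat _ (he i) i h
    · rw [hP1] at h
      rcases hprime.mem_or_mem h with h | h
      · rw [derivative_map, eval_map_algebraMap] at h
        exact h2 i h
      · exact hσi h


theorem clear_denom {R A L : Type*} [CommRing R] [CommRing A] [CommRing L] [Algebra R A] [Algebra A L]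
    [Algebra R L] [IsScalarTower R A L] (M : Submonoid R) [IsLocalization M A] (β y : L)
    (hy : y ∈ Algebra.adjoin A {β}) : ∃ r ∈ M, algebraMap R L r * y ∈ Algebra.adjoin R {β} := by
  rw [Algebra.adjoin_singleton_eq_range_aeval] at hy
  obtain ⟨g, rfl⟩ := hy
  obtain ⟨r, hrM, hr⟩ := IsLocalization.integerNormalization_spec M g
  refine ⟨r, hrM, ?_⟩
  have h := congrArg (aeval β) hr
  rw [aeval_map_algebraMap] at h
  have e : algebraMap R L r * aeval β g = aeval β (r • g) := by
    rw [Algebra.smul_def, map_mul]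
    congr 1
    rw [Polynomial.algebraMap_apply, aeval_C, ← IsScalarTower.algebraMap_apply R A L]
  change algebraMap R L r * aeval β g ∈ _
  rw [e]
  change _ = aeval β (r • g) at h
  rw [← h]
  exact aeval_mem_adjoin_singleton R β

theorem clear_denom_poly {R A L : Type*} [CommRing R] [CommRing A] [CommRing L] [Algebra R A] [Algebra A L]
    [Algebra R L] [IsScalarTower R A L] (M : Submonoid R) [IsLocalization M A] (β : L) (φ : L[X])
    (hy : ∀ i, φ.coeff i ∈ Algebra.adjoin A {β}) : ∃ r ∈ M, ∀ i, algebraMap R L r * φ.coeff i ∈ Algebra.adjoin R {β} := by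
  classical
  have key : ∀ s : Finset ℕ, ∃ r ∈ M, ∀ i ∈ s, algebraMap R L r * φ.coeff i ∈ Algebra.adjoin R {β} := by
    intro s
    induction s using Finset.induction_on with
    | empty => exact ⟨1, one_mem _, by simp⟩
    | insert a s ha ih =>
      obtain ⟨r, hr, h⟩ := ih
      obtain ⟨r', hr', h'⟩ := clear_denom (A := A) M β (φ.coeff a) (hy a)
      refine ⟨r * r', mul_mem hr hr', fun i hi => ?_⟩
      rcases Finset.mem_insert.mp hi with rfl | hi
      · rw [map_mul, mul_assoc]
        exact mul_mem (Subalgebra.algebraMap_mem _ _) h'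
      · rw [mul_comm r, map_mul, mul_assoc]
        exact mul_mem (Subalgebra.algebraMap_mem _ _) (h i hi)
  obtain ⟨r, hr, h⟩ := key φ.support
  refine ⟨r, hr, fun i => ?_⟩
  by_cases hi : i ∈ φ.support
  · exact h i hi
  · rw [notMem_support_iff.mp hi, mul_zero]; exact zero_mem _

theorem poly_approx {A0 R0 : Type*} [CommRing A0] [CommRing R0] (c : A0 →+* R0) (G : R0)
    (hG : ∀ r, ∃ a b, r = c a + G * b) (n : ℕ) (g : R0[X]) (hg : g.degree < n) :
    ∃ (a : A0[X]) (h : R0[X]), a.degree < n ∧ a.map c = g + C G * h := by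
  choose a b hab using hG
  refine ⟨∑ i ∈ Finset.range n, C (a (g.coeff i)) * X ^ i,
    - ∑ i ∈ Finset.range n, C (b (g.coeff i)) * X ^ i, ?_, ?_⟩
  · rw [degree_lt_iff_coeff_zero]
    intro m hm
    rw [finsetSum_coeff]
    refine Finset.sum_eq_zero fun i hi => ?_
    rw [coeff_C_mul_X_pow, if_neg]
    have := Finset.mem_range.mp hi
    omega
  · rw [degree_lt_iff_coeff_zero] at hg
    ext m
    simp only [Polynomial.map_sum, coeff_add, coeff_C_mul, coeff_neg, finsetSum_coeff, coeff_X_pow, mul_ite, mul_one, mul_zero,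
      Polynomial.map_mul, Polynomial.map_pow, map_C, map_X, Finset.sum_ite_eq, Finset.mem_range]
    by_cases hm : m < n
    · rw [if_pos hm, if_pos hm]
      linear_combination - hab (g.coeff m)
    · rw [if_neg hm, if_neg hm, hg m (not_lt.mp hm)]; simp


theorem lift_poly {R L : Type*} [CommRing R] [CommRing L] [Algebra R L] (S : Subalgebra R L)
    (φ : L[X]) (h : ∀ i, φ.coeff i ∈ S) : ∃ Φ : S[X], Φ.map (algebraMap S L) = φ := by
  have : φ ∈ lifts (algebraMap S L) := by
    rw [lifts_iff_coeff_lifts]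
    intro i
    exact ⟨⟨_, h i⟩, rfl⟩
  exact (mem_lifts _).mp this

theorem kras {A0 R0 Fr l : Type*} [CommRing A0] [CommRing R0] [IsDomain R0] [IsNoetherianRing R0]
    [IsIntegrallyClosed R0] (x : R0) (hx : x ≠ 0) [IsAdicComplete (Ideal.span {x}) R0] [Field Fr] [CharZero Fr]
    [Algebra R0 Fr] [IsFractionRing R0 Fr] [Field l] [Algebra Fr l] [Algebra R0 l] [IsScalarTower R0 Fr l]
    [FiniteDimensional Fr l] (c : A0 →+* R0)
    (hW : ∀ G : R0, G ≠ 0 → ∀ r, ∃ a b, r = c a + G * b) :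
    ∃ (β : l) (p : A0[X]), p.Monic ∧ p.natDegree = Module.finrank Fr l ∧
      aeval β (p.map c) = 0 ∧ aeval β (derivative (p.map c)) ≠ 0 ∧ Algebra.adjoin Fr {β} = ⊤ := by
  have hRinj : Function.Injective (algebraMap R0 Fr) := IsFractionRing.injective R0 Fr
  have hinj : Function.Injective (algebraMap R0 l) := by
    rw [IsScalarTower.algebraMap_eq R0 Fr l]
    exact (algebraMap Fr l).injective.comp hRinj
  have gen_top : ∀ β : l, Algebra.adjoin Fr {β} = ⊤ → (minpoly Fr β).natDegree = Module.finrank Fr l := by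
    intro β hβ
    have hi : IsIntegral Fr β := Algebra.IsIntegral.isIntegral β
    rw [← IntermediateField.adjoin.finrank hi]
    have : IntermediateField.adjoin Fr {β} = ⊤ := by
      rw [← IntermediateField.toSubalgebra_inj, IntermediateField.adjoin_simple_toSubalgebra_of_isAlgebraic hi.isAlgebraic, hβ]; rfl
    rw [this, IntermediateField.finrank_top']
  obtain ⟨β, hβint, hβgen⟩ : ∃ β : l, IsIntegral R0 β ∧ Algebra.adjoin Fr {β} = ⊤ := by
    obtain ⟨β0, hβ0⟩ := Field.exists_primitive_element Fr l
    have hi : IsIntegral Fr β0 := Algebra.IsIntegral.isIntegral β0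
    obtain ⟨y, hy⟩ := IsIntegral.exists_multiple_integral_of_isLocalization (nonZeroDivisors R0) β0 hi
    refine ⟨_, hy, ?_⟩
    have hy0 : algebraMap R0 Fr y ≠ 0 := by
      rw [Ne, map_eq_zero_iff _ hRinj]; exact nonZeroDivisors.ne_zero y.2
    rw [← IntermediateField.toSubalgebra_inj, IntermediateField.adjoin_simple_toSubalgebra_of_isAlgebraic hi.isAlgebraic] at hβ0
    rw [eq_top_iff, ← IntermediateField.top_toSubalgebra, ← hβ0]
    refine Algebra.adjoin_le ?_
    rw [Set.singleton_subset_iff]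
    have : β0 = (algebraMap R0 Fr y)⁻¹ • (y • β0) := by
      rw [Submonoid.smul_def, ← algebraMap_smul Fr (y : R0) β0, smul_smul, inv_mul_cancel₀ hy0, one_smul]
    have hm := Subalgebra.smul_mem _ (Algebra.self_mem_adjoin_singleton Fr (y • β0)) (algebraMap R0 Fr y)⁻¹
    rw [← this] at hm
    exact hm
  set f := minpoly R0 β with hf
  have hfm : f.Monic := minpoly.monic hβint
  have hfα : aeval β f = 0 := minpoly.aeval _ _
  have hfF : minpoly Fr β = f.map (algebraMap R0 Fr) := minpoly.isIntegrallyClosed_eq_field_fractions' Fr hβint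
  have hfn : f.natDegree = Module.finrank Fr l := by
    rw [← gen_top β hβgen, hfF, hfm.natDegree_map]
  have sep : ∀ (β : l) (p : R0[X]), minpoly Fr β = p.map (algebraMap R0 Fr) → aeval β (derivative p) ≠ 0 := by
    intro β p hp
    have hi : IsIntegral Fr β := Algebra.IsIntegral.isIntegral β
    have hs : (minpoly Fr β).Separable := (minpoly.irreducible hi).separable
    have := hs.aeval_derivative_ne_zero (minpoly.aeval Fr β)
    rwa [hp, derivative_map, aeval_map_algebraMap] at this
  have hd := sep β f hfF
  set S := Algebra.adjoin R0 {β} with hS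
  obtain ⟨Q, hQ, hV⟩ := clear_denom (A := Fr) (nonZeroDivisors R0) β (aeval β (derivative f))⁻¹
    (by rw [hβgen]; trivial)
  have hQ0 : Q ≠ 0 := nonZeroDivisors.ne_zero hQ
  let βS : S := ⟨β, Algebra.self_mem_adjoin_singleton _ _⟩
  let Φ : S[X] := C (algebraMap R0 S Q) * taylor βS (f.map (algebraMap R0 S))
  obtain ⟨a, h, had, hah⟩ := poly_approx c ((1 : R0) * (x * Q) ^ 3) (hW _ (by simp [hx, hQ0])) f.natDegree (f - X ^ f.natDegree) (by
    have := degree_sub_lt (p := f) (q := X ^ f.natDegree) (by simp [degree_eq_natDegree hfm.ne_zero]) hfm.ne_zero (by simp [hfm.leadingCoeff])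
    rwa [degree_eq_natDegree hfm.ne_zero] at this)
  have hS0 : ∀ g : R0[X], ((aeval βS g : S) : l) = aeval β g := fun g => by
    have := aeval_algebraMap_apply l βS g
    exact this.symm
  have hΦ : ∀ z : l, algebraMap R0 l Q * aeval (β + 1 * z) f = algebraMap R0 l 1 * aeval z Φ := by
    intro z
    simp only [Φ, map_mul, map_one, one_mul, aeval_C]
    congr 1
    rw [taylor_apply, aeval_comp]
    simp only [map_add, aeval_X, aeval_C, aeval_map_algebraMap]
    congr 2
    exact add_comm _ _
  have hΦ0 : Φ.coeff 0 = 0 := by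
    simp only [Φ, coeff_C_mul, taylor_coeff_zero, eval_map_algebraMap]
    apply Subtype.ext
    simp [hS0, hfα]
  have hΦ1 : (⟨_, hV⟩ : S) * Φ.coeff 1 = algebraMap R0 S (Q ^ 2) := by
    simp only [Φ, coeff_C_mul, taylor_coeff_one, derivative_map, eval_map_algebraMap]
    apply Subtype.ext
    simp only [MulMemClass.coe_mul, hS0]
    change algebraMap R0 l Q * (aeval β (derivative f))⁻¹ * (algebraMap R0 l Q * _) = algebraMap R0 l (Q ^ 2)
    rw [map_pow]
    field_simp
  obtain ⟨β', hβ'0, hβ'gen⟩ := perturb (Fr := Fr) x hinj β f hfm hfα hβgen 1 Q hQ0 1 S hS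
    (algebraMap R0 S Q) ⟨_, hV⟩ Φ (by simp) hΦ hΦ0 hΦ1 h
  have hpm : (X ^ f.natDegree + a).Monic := monic_X_pow_add had
  have hpmap : (X ^ f.natDegree + a).map c = f + C (1 * (x * Q) ^ 3) * h := by
    rw [Polynomial.map_add, hah]; simp; ring
  have hpn : (X ^ f.natDegree + a).natDegree = f.natDegree := by
    by_cases hA : Nontrivial A0
    · rw [natDegree_add_eq_left_of_degree_lt (by rwa [degree_X_pow]), natDegree_X_pow]
    · exfalso
      rw [not_nontrivial_iff_subsingleton] at hA
      have : (1 : R0) = 0 := by rw [← map_one c, Subsingleton.elim (1 : A0) 0, map_zero]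
      exact one_ne_zero this
  refine ⟨β', X ^ f.natDegree + a, hpm, by rw [hpn, hfn], by rw [hpmap]; exact hβ'0, ?_, hβ'gen⟩
  apply sep
  have hi : IsIntegral Fr β' := Algebra.IsIntegral.isIntegral β'
  symm
  apply eq_of_monic_of_dvd_of_natDegree_le (minpoly.monic hi) ((hpm.map c).map _)
  · apply minpoly.dvd
    rw [aeval_map_algebraMap, hpmap, hβ'0]
  · rw [gen_top _ hβ'gen, (hpm.map c).natDegree_map, hpm.natDegree_map, hpn, hfn]


theorem kras_q {A0 A R0 B : Type*} [CommRing A0] [CommRing A] [IsLocalRing A] [Algebra A0 A]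
    [CommRing R0] [IsDomain R0] [IsNoetherianRing R0]
    [IsIntegrallyClosed R0] (x : R0) (hx : x ≠ 0) [IsAdicComplete (Ideal.span {x}) R0]
    [CharZero (A ⧸ IsLocalRing.maximalIdeal A)]
    [Algebra R0 (A ⧸ IsLocalRing.maximalIdeal A)] [IsFractionRing R0 (A ⧸ IsLocalRing.maximalIdeal A)]
    (c : A0 →+* R0)
    (hc : ∀ a, algebraMap R0 (A ⧸ IsLocalRing.maximalIdeal A) (c a) = Ideal.Quotient.mk _ (algebraMap A0 A a))
    (hW : ∀ G : R0, G ≠ 0 → ∀ r, ∃ a b, r = c a + G * b)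
    [CommRing B] [Algebra A B] [Algebra A0 B] [IsScalarTower A0 A B] [Module.Finite A B]
    (q : Ideal B) [hq : q.IsMaximal] [q.LiesOver (IsLocalRing.maximalIdeal A)] :
    ∃ (b : B) (p : A0[X]), p.Monic ∧ p.natDegree = q.inertiaDeg A ∧
      aeval b p ∈ q ∧ aeval b (derivative p) ∉ q ∧ ∀ y : B, ∃ g : A[X], y - aeval b g ∈ q := by
  letI : Field (A ⧸ IsLocalRing.maximalIdeal A) := Ideal.Quotient.field _
  letI : Field (B ⧸ q) := Ideal.Quotient.field _
  letI : Algebra R0 (B ⧸ q) := ((algebraMap (A ⧸ IsLocalRing.maximalIdeal A) (B ⧸ q)).comp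
    (algebraMap R0 (A ⧸ IsLocalRing.maximalIdeal A))).toAlgebra
  haveI : IsScalarTower R0 (A ⧸ IsLocalRing.maximalIdeal A) (B ⧸ q) := IsScalarTower.of_algebraMap_eq fun _ => rfl
  obtain ⟨β, p, hp, hpn, h1, h2, hgen⟩ := kras (Fr := A ⧸ IsLocalRing.maximalIdeal A) (l := B ⧸ q) x hx c hW
  obtain ⟨b, rfl⟩ := Ideal.Quotient.mk_surjective β
  have hev : ∀ r : A0[X], aeval (Ideal.Quotient.mk q b) (r.map c) = Ideal.Quotient.mk q (aeval b r) := by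
    intro r
    rw [aeval_def, eval₂_map, aeval_def, hom_eval₂]
    congr 1
    ext a
    change algebraMap (A ⧸ IsLocalRing.maximalIdeal A) (B ⧸ q) (algebraMap R0 _ (c a)) = Ideal.Quotient.mk q (algebraMap A0 B a)
    rw [hc, Ideal.Quotient.algebraMap_mk_of_liesOver, IsScalarTower.algebraMap_apply A0 A B]
  refine ⟨b, p, hp, ?_, ?_, ?_, ?_⟩
  · rw [hpn, Ideal.inertiaDeg_eq_of_isMaximal (IsLocalRing.maximalIdeal A) q]
  · rw [hev] at h1
    exact Ideal.Quotient.eq_zero_iff_mem.mp h1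
  · rw [derivative_map, hev] at h2
    exact fun h => h2 (Ideal.Quotient.eq_zero_iff_mem.mpr h)
  · intro y
    have : Ideal.Quotient.mk q y ∈ Algebra.adjoin (A ⧸ IsLocalRing.maximalIdeal A) {Ideal.Quotient.mk q b} := by
      rw [hgen]; trivial
    rw [Algebra.adjoin_singleton_eq_range_aeval] at this
    obtain ⟨g0, hg0⟩ := this
    obtain ⟨g, rfl⟩ := map_surjective _ Ideal.Quotient.mk_surjective g0
    refine ⟨g, ?_⟩
    rw [← Ideal.Quotient.eq, ← hg0]
    change aeval _ _ = _
    rw [aeval_def, eval₂_map, aeval_def, hom_eval₂]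
    rfl

theorem core2 {A0 A R0 B : Type*} [CommRing A0] [CommRing A] [IsDomain A] [IsDiscreteValuationRing A] [Algebra A0 A]
    [CommRing R0] [IsDomain R0] [IsNoetherianRing R0]
    [IsIntegrallyClosed R0] (x : R0) (hx : x ≠ 0) [IsAdicComplete (Ideal.span {x}) R0]
    [CharZero (A ⧸ IsLocalRing.maximalIdeal A)]
    [Algebra R0 (A ⧸ IsLocalRing.maximalIdeal A)] [IsFractionRing R0 (A ⧸ IsLocalRing.maximalIdeal A)]
    (c : A0 →+* R0)
    (hc : ∀ a, algebraMap R0 (A ⧸ IsLocalRing.maximalIdeal A) (c a) = Ideal.Quotient.mk _ (algebraMap A0 A a))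
    (hW : ∀ G : R0, G ≠ 0 → ∀ r, ∃ a b, r = c a + G * b)
    (t : A) (ht : IsLocalRing.maximalIdeal A = Ideal.span {t})
    [CommRing B] [IsDedekindDomain B] [Algebra A B] [Algebra A0 B] [IsScalarTower A0 A B] [Module.Finite A B]
    [Module.IsTorsionFree A B] :
    ∃ (α : B) (Q : A0[X]) (g : A[X]) (ρ : B) (φ : B[X]), Algebra.adjoin A {α} = ⊤ ∧
      Q.Monic ∧ Q.natDegree = Module.finrank A B ∧ g.degree < Module.finrank A B ∧
      C (algebraMap A B t) * φ =
        ((Q.map (algebraMap A0 A) - C t * g).map (algebraMap A B)).comp (C α + C ρ * X) ∧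
      φ.coeff 0 = 0 ∧ IsUnit (φ.coeff 1) := by
  classical
  have hm0 : IsLocalRing.maximalIdeal A ≠ ⊥ := IsDiscreteValuationRing.not_a_field A
  have hmax : ∀ q : (IsLocalRing.maximalIdeal A).primesOver B, q.1.IsMaximal := fun q =>
    have := q.2.1; have := q.2.2; Ideal.IsMaximal.of_liesOver_isMaximal q.1 (IsLocalRing.maximalIdeal A)
  have hdata : ∀ q : (IsLocalRing.maximalIdeal A).primesOver B, ∃ (b : B) (p : A0[X]), p.Monic ∧ p.natDegree = q.1.inertiaDeg A ∧
      aeval b p ∈ q.1 ∧ aeval b (derivative p) ∉ q.1 ∧ ∀ y : B, ∃ g : A[X], y - aeval b g ∈ q.1 := fun q =>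
    have := hmax q; have := q.2.2; kras_q x hx c hc hW q.1
  set m := IsLocalRing.maximalIdeal A with hm
  choose b p hp hpn h1 h2 h3 using hdata
  refine core t ht (fun q : m.primesOver B => q.1) hmax Subtype.val_injective ?_ ?_ ?_
    (fun q => q.1.ramificationIdx A) ?_ ?_ (Module.finrank A B) ?_ b p hp h1 h2 h3 ?_
  · intro q
    have := q.2.1; have := q.2.2
    exact Ideal.ne_bot_of_liesOver_of_ne_bot hm0 q.1
  · intro M hM
    have hu : M.under A = m := IsLocalRing.eq_maximalIdeal (Ideal.IsMaximal.under A M)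
    exact ⟨⟨M, hM.isPrime, ⟨hu.symm⟩⟩, rfl⟩
  · intro n hn q hmem
    have := q.2.2
    have hA : (n : A) ∈ m := by
      rw [q.2.2.over]
      simpa [Ideal.mem_comap] using hmem
    have : ((n : ℕ) : A ⧸ m) = 0 := by
      rw [← map_natCast (Ideal.Quotient.mk m)]; exact Ideal.Quotient.eq_zero_iff_mem.mpr hA
    exact hn (Nat.cast_eq_zero.mp this)
  · intro q
    have := q.2.1
    exact (Ideal.ramificationIdx_pos q.1 A).ne'
  · rw [← Set.image_singleton, ← Ideal.map_span, ← ht, Ideal.map_algebraMap_eq_finsetProd_pow hm0,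
      ← Finset.prod_set_coe]
  · intro α
    have : Module.Free A B := inferInstance
    refine ⟨(LinearMap.charpoly (Algebra.lmul A B α)), LinearMap.charpoly_monic _, LinearMap.charpoly_natDegree _, ?_⟩
    have h := LinearMap.aeval_self_charpoly (Algebra.lmul A B α)
    rw [aeval_algHom_apply] at h
    have h' := congrArg (fun f : Module.End A B => f 1) h
    simpa using h'
  · simp only [hpn]
    exact Ideal.sum_ramification_inertia_eq_finrank m B


theorem core3 {A0 A R0 F L : Type*} [CommRing A0] [CommRing A] [IsDomain A] [IsDiscreteValuationRing A] [Algebra A0 A]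
    [CommRing R0] [IsDomain R0] [IsNoetherianRing R0]
    [IsIntegrallyClosed R0] (x : R0) (hx : x ≠ 0) [IsAdicComplete (Ideal.span {x}) R0]
    [CharZero (A ⧸ IsLocalRing.maximalIdeal A)]
    [Algebra R0 (A ⧸ IsLocalRing.maximalIdeal A)] [IsFractionRing R0 (A ⧸ IsLocalRing.maximalIdeal A)]
    (c : A0 →+* R0)
    (hc : ∀ a, algebraMap R0 (A ⧸ IsLocalRing.maximalIdeal A) (c a) = Ideal.Quotient.mk _ (algebraMap A0 A a))
    (hW : ∀ G : R0, G ≠ 0 → ∀ r, ∃ a b, r = c a + G * b)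
    (t : A) (ht : IsLocalRing.maximalIdeal A = Ideal.span {t})
    [Field F] [CharZero F] [Algebra A F] [IsFractionRing A F] [Field L] [Algebra F L] [Algebra A L]
    [IsScalarTower A F L] [FiniteDimensional F L] :
    ∃ (α : L) (Q : A0[X]) (g : A[X]) (ρ : L) (φ : L[X]) (v : L), Algebra.adjoin F {α} = ⊤ ∧
      Q.Monic ∧ Q.natDegree = Module.finrank F L ∧ g.degree < Module.finrank F L ∧
      C (algebraMap A L t) * φ =
        ((Q.map (algebraMap A0 A) - C t * g).map (algebraMap A L)).comp (C α + C ρ * X) ∧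
      φ.coeff 0 = 0 ∧ v * φ.coeff 1 = 1 ∧ ρ ∈ Algebra.adjoin A {α} ∧ v ∈ Algebra.adjoin A {α} ∧
      ∀ i, φ.coeff i ∈ Algebra.adjoin A {α} := by
  let B := integralClosure A L
  haveI : IsDedekindDomain B := IsIntegralClosure.isDedekindDomain A F L B
  haveI : Module.Finite A B := IsIntegralClosure.finite A F L B
  letI : Algebra A0 B := ((algebraMap A B).comp (algebraMap A0 A)).toAlgebra
  haveI : IsScalarTower A0 A B := IsScalarTower.of_algebraMap_eq fun _ => rfl
  have hinj : Function.Injective (algebraMap A L) := by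
    rw [IsScalarTower.algebraMap_eq A F L]
    exact (algebraMap F L).injective.comp (IsFractionRing.injective A F)
  haveI : FaithfulSMul A L := (faithfulSMul_iff_algebraMap_injective A L).mpr hinj
  haveI : Module.IsTorsionFree A B := inferInstance
  obtain ⟨α, Q, g, ρ, φ, hadj, hQ, hQn, hg, hφ, hφ0, hφ1⟩ := core2 (B := B) x hx c hc hW t ht
  have hrank : Module.finrank A B = Module.finrank F L := IsIntegralClosure.rank A F L B
  rw [hrank] at hQn hg
  have hmem : ∀ y : B, (y : L) ∈ Algebra.adjoin A {(α : L)} := by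
    intro y
    have hy : y ∈ Algebra.adjoin A {α} := by rw [hadj]; trivial
    have h : (y : L) ∈ (Algebra.adjoin A {α}).map B.val := Subalgebra.mem_map.mpr ⟨y, hy, rfl⟩
    rw [AlgHom.map_adjoin, Set.image_singleton] at h
    exact h
  obtain ⟨u, hu⟩ := hφ1
  refine ⟨α, Q, g, ρ, φ.map (algebraMap B L), ((u⁻¹ : Bˣ) : B), ?_, hQ, hQn, hg, ?_, ?_, ?_, hmem _, hmem _, ?_⟩
  · rw [eq_top_iff]
    intro y _
    have hi : IsIntegral F y := Algebra.IsIntegral.isIntegral y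
    obtain ⟨⟨a, ha0⟩, ha⟩ := IsIntegral.exists_multiple_integral_of_isLocalization (nonZeroDivisors A) y hi
    replace ha0 := nonZeroDivisors.ne_zero ha0
    replace ha : IsIntegral A (a • y) := ha
    have hm := hmem ⟨_, ha⟩
    have hle : Algebra.adjoin A {(α : L)} ≤ (Algebra.adjoin F {(α : L)}).restrictScalars A :=
      Algebra.adjoin_le (by simpa using Algebra.self_mem_adjoin_singleton F (α : L))
    have hm' : a • y ∈ Algebra.adjoin F {(α : L)} := hle hm
    have ha0' : algebraMap A F a ≠ 0 := by
      rwa [Ne, map_eq_zero_iff _ (IsFractionRing.injective A F)]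
    have e : y = (algebraMap A F a)⁻¹ • (a • y) := by
      rw [← algebraMap_smul F a y, smul_smul, inv_mul_cancel₀ ha0', one_smul]
    rw [e]
    exact Subalgebra.smul_mem _ hm' _
  · have h := congrArg (Polynomial.map (algebraMap B L)) hφ
    rw [Polynomial.map_mul, map_C, ← IsScalarTower.algebraMap_apply, Polynomial.map_comp, Polynomial.map_map,
      ← IsScalarTower.algebraMap_eq] at h
    rw [h]
    simp
  · rw [coeff_map, hφ0, map_zero]
  · rw [coeff_map, ← hu]
    change algebraMap B L _ * _ = _
    rw [← map_mul]; simp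
  · intro i
    rw [coeff_map]; exact hmem _


theorem monic_sub_aux {S : Type*} [CommRing S] [Nontrivial S] (N : ℕ) (q h : S[X]) (c : S) (hq : q.Monic)
    (hqn : q.natDegree = N) (hh : h.degree < N) :
    (q - C c * h).Monic ∧ (q - C c * h).natDegree = N := by
  have hd : (C c * h).degree < q.degree := by
    rw [degree_eq_natDegree hq.ne_zero, hqn]
    refine lt_of_le_of_lt ?_ hh
    exact (degree_mul_le _ _).trans (by
      calc (C c).degree + h.degree ≤ 0 + h.degree := by gcongr; exact degree_C_le
        _ = h.degree := zero_add _)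
  refine ⟨hq.sub_of_left hd, ?_⟩
  rw [natDegree_eq_of_degree_eq (degree_sub_eq_left_of_degree_lt hd), hqn]

theorem assemble {A0 R A F L : Type*} [CommRing A0] [CommRing R] [IsDomain R] [IsNoetherianRing R]
    (x : R) [IsAdicComplete (Ideal.span {x}) R] [CommRing A] [Field F] [Field L]
    [Algebra A0 R] [Algebra A0 A] [Algebra R A] [IsScalarTower A0 R A]
    [Algebra R F] [Algebra A F] [Algebra F L] [Algebra A L] [Algebra R L] [IsScalarTower R F L]
    [IsScalarTower A F L] [IsScalarTower R A L]
    (hinj : Function.Injective (algebraMap R L)) [FiniteDimensional F L]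
    (M : Submonoid R) (hM : M ≤ nonZeroDivisors R) [IsLocalization M A] (hx : x ∈ M)
    (hWR : ∀ G ∈ M, ∀ r : R, ∃ a b, r = algebraMap A0 R a + G * b)
    (hs : ∀ r ∈ M, ∃ s : A0, algebraMap A0 R s ∈ M ∧ r ∣ algebraMap A0 R s) (t0 : A0)
    (α : L) (Q : A0[X]) (g : A[X]) (ρ : L) (φ : L[X]) (v : L) (hgen : Algebra.adjoin F {α} = ⊤)
    (hQ : Q.Monic) (hQn : Q.natDegree = Module.finrank F L) (hg : g.degree < Module.finrank F L)
    (hφ : C (algebraMap A L (algebraMap A0 A t0)) * φ =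
        ((Q.map (algebraMap A0 A) - C (algebraMap A0 A t0) * g).map (algebraMap A L)).comp (C α + C ρ * X))
    (hφ0 : φ.coeff 0 = 0) (hφ1 : v * φ.coeff 1 = 1) (hρ : ρ ∈ Algebra.adjoin A {α})
    (hv : v ∈ Algebra.adjoin A {α}) (hφc : ∀ i, φ.coeff i ∈ Algebra.adjoin A {α}) :
    ∃ (f : A0[X]) (α' : L), f.Monic ∧ f.natDegree = Module.finrank F L ∧
      aeval α' (f.map (algebraMap A0 R)) = 0 ∧ Algebra.adjoin F {α'} = ⊤ := by
  set N := Module.finrank F L with hN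
  have hNpos : 0 < N := Module.finrank_pos
  have hRA : Function.Injective (algebraMap R A) := IsLocalization.injective A hM
  obtain ⟨r, hrM, hr⟩ := IsLocalization.integerNormalization_spec M g
  obtain ⟨s0, hs0M, w, hw⟩ := hs r hrM
  set s := algebraMap A0 R s0 with hs_def
  set gR : R[X] := C w * IsLocalization.integerNormalization M g with hgR
  have hgRm : gR.map (algebraMap R A) = C (algebraMap R A s) * g := by
    rw [hgR, Polynomial.map_mul, hr, map_C, hw, ← algebraMap_smul A r g, smul_eq_C_mul, map_mul, C_mul]
    ring
  have hgRd : gR.degree < N := by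
    rw [← degree_map_eq_of_injective hRA, hgRm]
    refine lt_of_le_of_lt ?_ hg
    exact (degree_mul_le _ _).trans (by
      calc (C (algebraMap R A s)).degree + g.degree ≤ 0 + g.degree := by gcongr; exact degree_C_le
        _ = g.degree := zero_add _)
  have hgRn : gR.natDegree < N := by
    by_cases h0 : gR = 0
    · rw [h0, natDegree_zero]; exact hNpos
    · exact (natDegree_lt_iff_degree_lt h0).mpr hgRd
  set sL := algebraMap R L s with hsL
  have hsM0 : s ≠ 0 := nonZeroDivisors.ne_zero (hM hs0M)
  have hsL0 : sL ≠ 0 := by rwa [hsL, Ne, map_eq_zero_iff _ hinj]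
  set t := algebraMap A0 R t0 with ht
  set gs : R[X] := ∑ i ∈ Finset.range N, C (s ^ (N - 1 - i) * gR.coeff i) * X ^ i with hgs
  have hgsd : gs.degree < N := by
    rw [degree_lt_iff_coeff_zero]
    intro m hm
    rw [hgs, finsetSum_coeff]
    refine Finset.sum_eq_zero fun i hi => ?_
    rw [coeff_C_mul_X_pow, if_neg]
    have := Finset.mem_range.mp hi
    omega
  have hgse : ∀ z : L, aeval (sL * z) gs = sL ^ N * aeval z g := by
    intro z
    have h1 : sL * aeval z g = aeval z gR := by
      rw [← aeval_map_algebraMap A z gR, hgRm, map_mul, aeval_C, ← IsScalarTower.algebraMap_apply]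
    have h2 : sL ^ N = sL ^ (N - 1) * sL := by rw [← pow_succ]; congr 1; omega
    rw [h2, mul_assoc, h1, aeval_eq_sum_range' hgRn, Finset.mul_sum, hgs, map_sum]
    refine Finset.sum_congr rfl fun i hi => ?_
    have hi' := Finset.mem_range.mp hi
    have h3 : sL ^ (N - 1) = sL ^ (N - 1 - i) * sL ^ i := by rw [← pow_add]; congr 1; omega
    rw [map_mul, aeval_C, map_pow, aeval_X, map_mul, map_pow, Algebra.smul_def, h3, mul_pow]
    ring
  set Qs : A0[X] := scaleRoots Q s0 with hQs
  have hQsm : Qs.Monic := by rw [hQs]; exact (monic_scaleRoots_iff s0).mpr hQ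
  have hQsn : Qs.natDegree = N := by rw [hQs, natDegree_scaleRoots, hQn]
  letI : Algebra A0 L := ((algebraMap R L).comp (algebraMap A0 R)).toAlgebra
  haveI : IsScalarTower A0 R L := IsScalarTower.of_algebraMap_eq fun _ => rfl
  haveI : IsScalarTower A0 A L := IsScalarTower.of_algebraMap_eq fun a => by
    rw [IsScalarTower.algebraMap_apply A0 R A, ← IsScalarTower.algebraMap_apply R A L]; rfl
  have hsL' : algebraMap A0 L s0 = sL := rfl
  have hQse : ∀ z : L, aeval (sL * z) Qs = sL ^ N * aeval z Q := by
    intro z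
    rw [← hsL', hQs, ← hQn, aeval_def, scaleRoots_eval₂_mul]
    rfl
  set fR : R[X] := Qs.map (algebraMap A0 R) - C t * gs with hfR
  haveI : Nontrivial A0 := (algebraMap A0 R).domain_nontrivial
  obtain ⟨hfRm, hfRn⟩ := monic_sub_aux N (Qs.map (algebraMap A0 R)) gs t (hQsm.map _)
    (by rw [hQsm.natDegree_map, hQsn]) hgsd
  rw [← hfR] at hfRm hfRn
  have htL : algebraMap A L (algebraMap A0 A t0) = algebraMap R L t := by
    rw [ht, IsScalarTower.algebraMap_apply A0 R A, ← IsScalarTower.algebraMap_apply R A L]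
  have hφe : ∀ z : L, algebraMap R L t * φ.eval z = aeval (α + ρ * z) Q - algebraMap R L t * aeval (α + ρ * z) g := by
    intro z
    have h := congrArg (eval z) hφ
    rw [eval_mul, eval_C, eval_comp, eval_map_algebraMap, map_sub, aeval_map_algebraMap, map_mul, aeval_C, htL] at h
    rw [h]; simp
  have hfRe : ∀ z : L, aeval (sL * (α + ρ * z)) fR = algebraMap R L t * (sL ^ N * φ.eval z) := by
    intro z
    rw [hfR, map_sub, aeval_map_algebraMap, map_mul, aeval_C, hgse, hQse]
    linear_combination - sL ^ N * hφe z
  have hfRα : aeval (sL * α) fR = 0 := by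
    have h := hfRe 0
    rw [← coeff_zero_eq_eval_zero, hφ0] at h
    simpa using h
  -- generator
  have hgen' : Algebra.adjoin F {sL * α} = ⊤ := by
    rw [eq_top_iff, ← hgen]
    refine Algebra.adjoin_le ?_
    rw [Set.singleton_subset_iff]
    have hm := Subalgebra.smul_mem _ (Algebra.self_mem_adjoin_singleton F (sL * α)) (algebraMap R F s)⁻¹
    rw [Algebra.smul_def, map_inv₀, ← IsScalarTower.algebraMap_apply R F L, inv_mul_cancel_left₀ hsL0] at hm
    exact hm
  obtain ⟨sinv, hsinv⟩ : ∃ y : A, algebraMap A L y = sL⁻¹ := by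
    obtain ⟨y, hy⟩ := (IsLocalization.map_units A (⟨s, hs0M⟩ : M)).exists_left_inv
    refine ⟨y, ?_⟩
    have h := congrArg (algebraMap A L) hy
    rw [map_mul, map_one, ← IsScalarTower.algebraMap_apply] at h
    exact eq_inv_of_mul_eq_one_left h
  have hle : Algebra.adjoin A {α} ≤ Algebra.adjoin A {sL * α} := by
    refine Algebra.adjoin_le ?_
    rw [Set.singleton_subset_iff]
    have hm := Subalgebra.smul_mem _ (Algebra.self_mem_adjoin_singleton A (sL * α)) sinv
    rw [Algebra.smul_def, hsinv, inv_mul_cancel_left₀ hsL0] at hm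
    exact hm
  have hsLmem : ∀ k, sL ^ k ∈ Algebra.adjoin A {sL * α} := fun k => pow_mem (by
    rw [hsL, IsScalarTower.algebraMap_apply R A L]; exact Subalgebra.algebraMap_mem _ _) k
  have hsimem : ∀ k, (sL⁻¹) ^ k ∈ Algebra.adjoin A {sL * α} := fun k => pow_mem (by
    rw [← hsinv]; exact Subalgebra.algebraMap_mem _ _) k
  obtain ⟨q1, hq1, h1⟩ := clear_denom M (sL * α) (sL * ρ) (mul_mem (by simpa using hsLmem 1) (hle hρ))
  obtain ⟨q2, hq2, h2⟩ := clear_denom M (sL * α) (v * (sL⁻¹) ^ N) (mul_mem (hle hv) (hsimem N))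
  obtain ⟨q3, hq3, h3⟩ := clear_denom_poly (A := A) M (sL * α) (C (sL ^ N) * φ) (fun i => by
    rw [coeff_C_mul]; exact mul_mem (hsLmem N) (hle (hφc i)))
  set q := q1 * q2 * q3 with hq
  have hqM : q ∈ M := mul_mem (mul_mem hq1 hq2) hq3
  have hq0 : q ≠ 0 := nonZeroDivisors.ne_zero (hM hqM)
  have h1' : algebraMap R L q * (sL * ρ) ∈ Algebra.adjoin R {sL * α} := by
    have := mul_mem (Subalgebra.algebraMap_mem (Algebra.adjoin R {sL * α}) (q2 * q3)) h1
    convert this using 1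
    rw [hq]; simp only [map_mul]; ring
  have h2' : algebraMap R L q * (v * (sL⁻¹) ^ N) ∈ Algebra.adjoin R {sL * α} := by
    have := mul_mem (Subalgebra.algebraMap_mem (Algebra.adjoin R {sL * α}) (q1 * q3)) h2
    convert this using 1
    rw [hq]; simp only [map_mul]; ring
  obtain ⟨Φ, hΦ⟩ := lift_poly (Algebra.adjoin R {sL * α}) (C (algebraMap R L q * sL ^ N) * φ) (fun i => by
    have := mul_mem (Subalgebra.algebraMap_mem (Algebra.adjoin R {sL * α}) (q1 * q2)) (h3 i)
    convert this using 1
    rw [hq, coeff_C_mul, coeff_C_mul]; simp only [map_mul]; ring)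
  obtain ⟨a, h, had, hah⟩ := poly_approx (algebraMap A0 R) ((x * q) ^ 3)
    (hWR _ (pow_mem (mul_mem hx hqM) 3)) N gs hgsd
  have hΦc : ∀ i, ((Φ.coeff i : Algebra.adjoin R {sL * α}) : L) = algebraMap R L q * sL ^ N * φ.coeff i := by
    intro i
    have := congrArg (fun p => coeff p i) hΦ
    simp only [coeff_map, coeff_C_mul] at this
    exact this
  have hp1 : ∀ z : L, algebraMap R L q * aeval (sL * α + sL * ρ * z) fR = algebraMap R L t * aeval z Φ := by
    intro z
    rw [← eval_map_algebraMap Φ z, hΦ, mul_assoc, ← mul_add, hfRe, eval_mul, eval_C]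
    ring
  have hp2 : Φ.coeff 0 = 0 := by
    apply Subtype.ext
    rw [hΦc, hφ0, mul_zero]; rfl
  have hp3 : (⟨_, h2'⟩ : Algebra.adjoin R {sL * α}) * Φ.coeff 1 = algebraMap R _ (q ^ 2) := by
    apply Subtype.ext
    rw [MulMemClass.coe_mul, hΦc]
    change _ = algebraMap R L (q ^ 2)
    rw [map_pow]
    have : (sL⁻¹) ^ N * sL ^ N = 1 := by rw [← mul_pow, inv_mul_cancel₀ hsL0, one_pow]
    linear_combination (algebraMap R L q ^ 2 * v * φ.coeff 1) * this + algebraMap R L q ^ 2 * hφ1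
  obtain ⟨α', hα', hα'gen⟩ := perturb (Fr := F) x hinj (sL * α) fR hfRm hfRα hgen' t q hq0 (sL * ρ)
    (Algebra.adjoin R {sL * α}) rfl ⟨_, h1'⟩ ⟨_, h2'⟩ Φ rfl hp1 hp2 hp3 (-h)
  obtain ⟨hfm, hfn⟩ := monic_sub_aux N Qs a t0 hQsm hQsn had
  refine ⟨Qs - C t0 * a, α', hfm, hfn, ?_, hα'gen⟩
  have e : (Qs - C t0 * a).map (algebraMap A0 R) = fR + C (t * (x * q) ^ 3) * -h := by
    rw [Polynomial.map_sub, Polynomial.map_mul, hah, map_C, hfR, C_mul]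
    ring
  rw [e, hα']


section
variable (T : Type*) [CommRing T] [IsDomain T] [IsDiscreteValuationRing T]

theorem ps_ker_prime : (RingHom.ker (PowerSeries.map (IsLocalRing.residue T))).IsPrime :=
  RingHom.ker_isPrime _

theorem ps_map_surj : Function.Surjective (PowerSeries.map (IsLocalRing.residue T)) :=
  PowerSeries.map_surjective _ IsLocalRing.residue_surjective

theorem ps_ker_eq (t : T) (ht : IsLocalRing.maximalIdeal T = Ideal.span {t}) :
    RingHom.ker (PowerSeries.map (IsLocalRing.residue T)) = Ideal.span {PowerSeries.C t} := by
  ext r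
  rw [RingHom.mem_ker, Ideal.mem_span_singleton]
  constructor
  · intro h
    have hi : ∀ i, ∃ y, PowerSeries.coeff i r = t * y := by
      intro i
      have h' := congrArg (PowerSeries.coeff i) h
      rw [PowerSeries.coeff_map, map_zero] at h'
      have : PowerSeries.coeff i r ∈ IsLocalRing.maximalIdeal T := (IsLocalRing.residue_eq_zero_iff _).mp h'
      rwa [ht, Ideal.mem_span_singleton] at this
    choose y hy using hi
    refine ⟨PowerSeries.mk y, ?_⟩
    ext i
    rw [PowerSeries.coeff_C_mul, PowerSeries.coeff_mk, hy]
  · rintro ⟨y, rfl⟩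
    rw [map_mul, PowerSeries.map_C, (IsLocalRing.residue_eq_zero_iff _).mpr, map_zero, zero_mul]
    rw [ht]; exact Ideal.mem_span_singleton_self _

theorem ps_div [IsAdicComplete (IsLocalRing.maximalIdeal T) T] (G : PowerSeries T)
    (hG : PowerSeries.map (IsLocalRing.residue T) G ≠ 0) (r : PowerSeries T) :
    ∃ a b, r = algebraMap T[X] (PowerSeries T) a + G * b := by
  obtain ⟨q, a, H⟩ := PowerSeries.exists_isWeierstrassDivision r hG
  refine ⟨a, q, ?_⟩
  rw [H.eq_mul_add, PowerSeries.algebraMap_apply', add_comm]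
  simp

theorem ps_prep [IsAdicComplete (IsLocalRing.maximalIdeal T) T] (G : PowerSeries T)
    (hG : PowerSeries.map (IsLocalRing.residue T) G ≠ 0) :
    ∃ s, PowerSeries.map (IsLocalRing.residue T) (algebraMap T[X] (PowerSeries T) s) ≠ 0 ∧
      G ∣ algebraMap T[X] (PowerSeries T) s := by
  obtain ⟨f, h, H⟩ := PowerSeries.exists_isWeierstrassFactorization hG
  have e : G = algebraMap T[X] (PowerSeries T) f * h := by
    rw [PowerSeries.algebraMap_apply']
    simpa using H.eq_mul
  refine ⟨f, ?_, ?_⟩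
  · intro h0
    apply hG
    rw [e, map_mul, h0, zero_mul]
  · obtain ⟨u, hu⟩ := H.isUnit
    refine ⟨((u⁻¹ : (PowerSeries T)ˣ) : PowerSeries T), ?_⟩
    rw [e, ← hu, Units.mul_inv_cancel_right]

theorem ps_dvr (t : T) (ht : IsLocalRing.maximalIdeal T = Ideal.span {t})
    (P : Ideal (PowerSeries T)) [P.IsPrime] (hP : P = Ideal.span {PowerSeries.C t}) :
    IsLocalRing.maximalIdeal (Localization.AtPrime P) = Ideal.span {algebraMap _ _ (PowerSeries.C t)} ∧
    IsDiscreteValuationRing (Localization.AtPrime P) := by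
  have h1 : IsLocalRing.maximalIdeal (Localization.AtPrime P) = Ideal.span {algebraMap _ _ (PowerSeries.C t)} := by
    rw [← Localization.AtPrime.map_eq_maximalIdeal]
    rw [congrArg (Ideal.map (algebraMap (PowerSeries T) (Localization.AtPrime P))) hP,
      Ideal.map_span, Set.image_singleton]
  refine ⟨h1, ?_⟩
  have : IsNoetherianRing (Localization.AtPrime P) := IsLocalization.isNoetherianRing P.primeCompl _ inferInstance
  have ht0 : t ≠ 0 := by
    rintro rfl
    apply IsDiscreteValuationRing.not_a_field T
    rw [ht]; simp
  have hnf : ¬ IsField (Localization.AtPrime P) := by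
    rw [IsLocalRing.isField_iff_maximalIdeal_eq, h1, Ideal.span_singleton_eq_bot]
    intro h
    rw [map_eq_zero_iff _ (IsLocalization.injective _ P.primeCompl_le_nonZeroDivisors)] at h
    exact ht0 (PowerSeries.C_injective (by rw [h, map_zero]))
  refine ((IsDiscreteValuationRing.TFAE (Localization.AtPrime P) hnf).out 0 4).mpr ?_
  rw [h1]; exact ⟨⟨_, rfl⟩⟩
end


theorem abs_main {A0 R R0 A F L : Type*} [CommRing A0] [CommRing R] [IsDomain R] [IsNoetherianRing R]
    [CommRing R0] [IsDomain R0] [IsNoetherianRing R0] [IsIntegrallyClosed R0] [CharZero R0]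
    (x : R) [IsAdicComplete (Ideal.span {x}) R]
    (π : R →+* R0) (hπs : Function.Surjective π) (x0 : R0) (hx0 : x0 ≠ 0) (hπx : π x = x0)
    [IsAdicComplete (Ideal.span {x0}) R0]
    (P : Ideal R) (hP : P = RingHom.ker π) [P.IsPrime] [CommRing A] [IsDomain A] [IsDiscreteValuationRing A]
    [Field F] [Field L] [Algebra A0 R] [Algebra A0 A] [Algebra R A] [IsScalarTower A0 R A]
    [IsLocalization.AtPrime A P]
    [Algebra R F] [IsFractionRing R F] [Algebra F L] [FiniteDimensional F L]
    (t0 : A0) (hm : IsLocalRing.maximalIdeal A = Ideal.span {algebraMap A0 A t0})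
    (hWR : ∀ G, π G ≠ 0 → ∀ r : R, ∃ a b, r = algebraMap A0 R a + G * b)
    (hs : ∀ r, π r ≠ 0 → ∃ s : A0, π (algebraMap A0 R s) ≠ 0 ∧ r ∣ algebraMap A0 R s) :
    ∃ (f : A0[X]) (α : L), f.Monic ∧ f.natDegree = Module.finrank F L ∧
      eval₂ ((algebraMap F L).comp ((algebraMap R F).comp (algebraMap A0 R))) α f = 0 ∧
      Algebra.adjoin F {α} = ⊤ := by
  letI : Algebra A F := IsLocalization.localizationAlgebraOfSubmonoidLe A F P.primeCompl (nonZeroDivisors R)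
    P.primeCompl_le_nonZeroDivisors
  haveI : IsScalarTower R A F := IsLocalization.localization_isScalarTower_of_submonoid_le A F P.primeCompl
    (nonZeroDivisors R) P.primeCompl_le_nonZeroDivisors
  haveI : IsFractionRing A F := IsFractionRing.isFractionRing_of_isDomain_of_isLocalization P.primeCompl A F
  letI : Algebra A L := ((algebraMap F L).comp (algebraMap A F)).toAlgebra
  haveI : IsScalarTower A F L := IsScalarTower.of_algebraMap_eq fun _ => rfl
  letI : Algebra R L := ((algebraMap F L).comp (algebraMap R F)).toAlgebra
  haveI : IsScalarTower R F L := IsScalarTower.of_algebraMap_eq fun _ => rfl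
  haveI : IsScalarTower R A L := IsScalarTower.of_algebraMap_eq fun a => by
    change algebraMap F L (algebraMap R F a) = algebraMap F L (algebraMap A F (algebraMap R A a))
    rw [← IsScalarTower.algebraMap_apply R A F]
  have hinj : Function.Injective (algebraMap R L) :=
    (algebraMap F L).injective.comp (IsFractionRing.injective R F)
  have hmemP : ∀ r : R, r ∈ P.primeCompl ↔ π r ≠ 0 := by
    subst hP
    exact fun r => Iff.rfl
  -- residue
  let res : R →+* A ⧸ IsLocalRing.maximalIdeal A := (Ideal.Quotient.mk _).comp (algebraMap R A)
  have hres : ∀ r, res r = 0 ↔ π r = 0 := by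
    intro r
    change Ideal.Quotient.mk _ (algebraMap R A r) = 0 ↔ _
    rw [Ideal.Quotient.eq_zero_iff_mem, IsLocalization.AtPrime.to_map_mem_maximal_iff A P, hP, RingHom.mem_ker]
  let j : R0 →+* A ⧸ IsLocalRing.maximalIdeal A := RingHom.liftOfSurjective π hπs ⟨res, fun r hr => (hres r).mpr hr⟩
  have hj : ∀ r, j (π r) = res r := fun r => RingHom.liftOfSurjective_comp_apply _ _ _ _
  have hjinj : Function.Injective j := by
    rw [injective_iff_map_eq_zero]
    intro y hy
    obtain ⟨r, rfl⟩ := hπs y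
    rw [hj] at hy
    exact (hres r).mp hy
  letI : Algebra R0 (A ⧸ IsLocalRing.maximalIdeal A) := j.toAlgebra
  haveI : IsFractionRing R0 (A ⧸ IsLocalRing.maximalIdeal A) := by
    letI : Field (A ⧸ IsLocalRing.maximalIdeal A) := Ideal.Quotient.field _
    haveI : FaithfulSMul R0 (A ⧸ IsLocalRing.maximalIdeal A) := (faithfulSMul_iff_algebraMap_injective _ _).mpr hjinj
    refine IsFractionRing.of_field R0 _ fun z => ?_
    obtain ⟨a, rfl⟩ := Ideal.Quotient.mk_surjective z
    obtain ⟨r, m, rfl⟩ := IsLocalization.exists_mk'_eq P.primeCompl a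
    refine ⟨π r, π m, ?_⟩
    change _ = j _ / j _
    rw [hj, hj, eq_div_iff (by rw [Ne, hres]; exact (hmemP m).mp m.2)]
    change Ideal.Quotient.mk _ _ * Ideal.Quotient.mk _ (algebraMap R A m) = Ideal.Quotient.mk _ (algebraMap R A r)
    rw [← map_mul, IsLocalization.mk'_spec]
  haveI : CharZero (A ⧸ IsLocalRing.maximalIdeal A) := charZero_of_injective_ringHom hjinj
  haveI : CharZero R := π.charZero
  haveI : CharZero F := charZero_of_injective_algebraMap (IsFractionRing.injective R F)
  let c : A0 →+* R0 := π.comp (algebraMap A0 R)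
  have hc : ∀ a, algebraMap R0 (A ⧸ IsLocalRing.maximalIdeal A) (c a) = Ideal.Quotient.mk _ (algebraMap A0 A a) := by
    intro a
    change j (π (algebraMap A0 R a)) = _
    rw [hj, IsScalarTower.algebraMap_apply A0 R A]
    rfl
  have hW : ∀ G : R0, G ≠ 0 → ∀ r, ∃ a b, r = c a + G * b := by
    intro G hG r
    obtain ⟨G, rfl⟩ := hπs G
    obtain ⟨r, rfl⟩ := hπs r
    obtain ⟨a, b, h⟩ := hWR G hG r
    refine ⟨a, π b, ?_⟩
    conv_lhs => rw [h]
    rw [map_add, map_mul]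
    rfl
  obtain ⟨α, Q, g, ρ, φ, v, h1, h2, h3, h4, h5, h6, h7, h8, h9, h10⟩ :=
    core3 (A0 := A0) (A := A) (R0 := R0) (F := F) (L := L) x0 hx0 c hc hW
      (algebraMap A0 A t0) hm
  obtain ⟨f, α', hf, hfn, hfα, hgen⟩ := assemble (A0 := A0) (R := R) (A := A) (F := F) (L := L) x hinj P.primeCompl
    P.primeCompl_le_nonZeroDivisors ((hmemP _).mpr (by rw [hπx]; exact hx0)) (fun G hG => hWR G ((hmemP G).mp hG))
    (fun r hr => by simpa only [hmemP] using hs r ((hmemP r).mp hr)) t0 α Q g ρ φ v h1 h2 h3 h4 h5 h6 h7 h8 h9 h10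
  refine ⟨f, α', hf, hfn, ?_, hgen⟩
  rw [aeval_def, eval₂_map] at hfα
  exact hfα

theorem ps_main (T : Type*) [CommRing T] [IsDomain T] [IsDiscreteValuationRing T]
    [IsAdicComplete (IsLocalRing.maximalIdeal T) T] [CharZero (IsLocalRing.ResidueField T)]
    (L : Type*) [Field L] [Algebra (FractionRing (PowerSeries T)) L]
    [FiniteDimensional (FractionRing (PowerSeries T)) L] :
    ∃ (f : T[X][X]) (α : L), f.Monic ∧ f.natDegree = Module.finrank (FractionRing (PowerSeries T)) L ∧
      eval₂ ((algebraMap (FractionRing (PowerSeries T)) L).comp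
        ((algebraMap (PowerSeries T) (FractionRing (PowerSeries T))).comp
          (algebraMap T[X] (PowerSeries T)))) α f = 0 ∧
      Algebra.adjoin (FractionRing (PowerSeries T)) {α} = ⊤ := by
  obtain ⟨t, ht⟩ : ∃ t : T, IsLocalRing.maximalIdeal T = Ideal.span {t} :=
    (IsPrincipalIdealRing.principal (IsLocalRing.maximalIdeal T)).principal
  haveI hPp := ps_ker_prime T
  obtain ⟨hm, hdvr⟩ := ps_dvr T t ht _ (ps_ker_eq T t ht)
  haveI : CharZero (PowerSeries (IsLocalRing.ResidueField T)) :=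
    charZero_of_injective_ringHom (f := PowerSeries.C (R := IsLocalRing.ResidueField T)) PowerSeries.C_injective
  refine abs_main (A0 := T[X]) (R := PowerSeries T) (R0 := PowerSeries (IsLocalRing.ResidueField T))
    (A := Localization.AtPrime (RingHom.ker (PowerSeries.map (IsLocalRing.residue T))))
    (F := FractionRing (PowerSeries T)) (L := L) PowerSeries.X (PowerSeries.map (IsLocalRing.residue T))
    (ps_map_surj T) PowerSeries.X PowerSeries.X_ne_zero (PowerSeries.map_X _) _ rfl (C t) ?_
    (ps_div T) (ps_prep T)
  rw [hm, IsScalarTower.algebraMap_apply T[X] (PowerSeries T), PowerSeries.algebraMap_apply']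
  simp

end

open scoped TensorProduct

section
open Polynomial
theorem final_iso {F K L : Type} [Field F] [Field K] [Field L] [Algebra F K] [Algebra K L]
    [FiniteDimensional K L] (f : F[X]) (hf : f.Monic) (α : L)
    (hn : f.natDegree = Module.finrank K L)
    (hα : eval₂ ((algebraMap K L).comp (algebraMap F K)) α f = 0)
    (hgen : Algebra.adjoin K {α} = ⊤) :
    letI : Algebra K ((K ⊗[F] AdjoinRoot f)) := Algebra.TensorProduct.leftAlgebra
    Irreducible f ∧ Nonempty ((K ⊗[F] AdjoinRoot f) ≃ₐ[K] L) := by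
  letI : Algebra F L := ((algebraMap K L).comp (algebraMap F K)).toAlgebra
  haveI : IsScalarTower F K L := IsScalarTower.of_algebraMap_eq fun _ => rfl
  have hint : IsIntegral K α := IsIntegral.of_finite K α
  have hdeg : (minpoly K α).natDegree = Module.finrank K L := by
    rw [← IntermediateField.adjoin.finrank hint]
    have : IntermediateField.adjoin K {α} = ⊤ := by
      rw [← IntermediateField.toSubalgebra_inj,
        IntermediateField.adjoin_simple_toSubalgebra_of_isAlgebraic hint.isAlgebraic, hgen]
      rfl
    rw [this, IntermediateField.finrank_top']
  have hroot : aeval α (f.map (algebraMap F K)) = 0 := by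
    rw [aeval_def, eval₂_map]; exact hα
  have heq : f.map (algebraMap F K) = minpoly K α := by
    refine eq_of_monic_of_dvd_of_natDegree_le (minpoly.monic hint) (hf.map _) (minpoly.dvd K α hroot) ?_
    rw [hf.natDegree_map, hn, hdeg]
  have hirr : Irreducible f :=
    hf.irreducible_of_irreducible_map (algebraMap F K) f (by rw [heq]; exact minpoly.irreducible hint)
  refine ⟨hirr, ?_⟩
  haveI : Fact (Irreducible f) := ⟨hirr⟩
  haveI : Module.Finite F (AdjoinRoot f) := hf.finite_adjoinRoot
  let e : AdjoinRoot f →ₐ[F] L := AdjoinRoot.liftAlgHom f (Algebra.ofId F L) α hα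
  let g : (K ⊗[F] AdjoinRoot f) →ₐ[K] L :=
    Algebra.TensorProduct.lift (Algebra.ofId K L) e (fun _ _ => Commute.all _ _)
  have hg : Function.Surjective g := by
    rw [← AlgHom.range_eq_top, eq_top_iff, ← hgen, Algebra.adjoin_le_iff, Set.singleton_subset_iff]
    refine ⟨1 ⊗ₜ AdjoinRoot.root f, ?_⟩
    change (Algebra.TensorProduct.lift _ _ _) _ = _
    rw [Algebra.TensorProduct.lift_tmul, map_one, one_mul]
    exact AdjoinRoot.lift_root hα
  have hfr : Module.finrank K (K ⊗[F] AdjoinRoot f) = Module.finrank K L := by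
    rw [Module.finrank_baseChange, ← hn]
    exact (AdjoinRoot.powerBasis hf.ne_zero).finrank.trans (AdjoinRoot.powerBasis_dim _)
  have hgi : Function.Injective g :=
    (LinearMap.injective_iff_surjective_of_finrank_eq_finrank hfr (f := g.toLinearMap)).mpr hg
  exact ⟨AlgEquiv.ofBijective g ⟨hgi, hg⟩⟩
end

attribute [local instance] Algebra.TensorProduct.rightAlgebra

/-- Descent from the complete local ring at a point: if `T` is a complete discrete
valuation ring with residue field of characteristic zero and fraction field `K`, then
every finite field extension of `Frac(T⟦x⟧)` is induced by a finite field extension of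
the rational function field `K(x)`, where `K(x)` embeds in `Frac(T⟦x⟧)` via
`T[x] ⊆ T⟦x⟧`. -/
theorem point_to_global_powerSeries_char_zero
    (T : Type) [CommRing T] [IsDomain T] [IsDiscreteValuationRing T]
    [IsAdicComplete (IsLocalRing.maximalIdeal T) T]
    [CharZero (IsLocalRing.ResidueField T)]
    (ψ : RatFunc (FractionRing T) →+* FractionRing (PowerSeries T))
    (hψ : ∀ q : Polynomial T,
      ψ (algebraMap (Polynomial (FractionRing T)) (RatFunc (FractionRing T))
          (q.map (algebraMap T (FractionRing T)))) =
        algebraMap (PowerSeries T) (FractionRing (PowerSeries T))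
          (Polynomial.coeToPowerSeries.ringHom q))
    (E_P : Type) [Field E_P] [Algebra (FractionRing (PowerSeries T)) E_P]
    [FiniteDimensional (FractionRing (PowerSeries T)) E_P] :
    letI : Algebra (RatFunc (FractionRing T)) (FractionRing (PowerSeries T)) :=
      ψ.toAlgebra
    ∃ (E : Type) (_ : Field E) (_ : Algebra (RatFunc (FractionRing T)) E),
      FiniteDimensional (RatFunc (FractionRing T)) E ∧
      Nonempty ((E ⊗[RatFunc (FractionRing T)] FractionRing (PowerSeries T))
        ≃ₐ[FractionRing (PowerSeries T)] E_P) := by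
  letI : Algebra (RatFunc (FractionRing T)) (FractionRing (PowerSeries T)) := ψ.toAlgebra
  obtain ⟨f, α, hf, hn, hα, hgen⟩ := ps_main T E_P
  let i : Polynomial T →+* RatFunc (FractionRing T) :=
    (algebraMap (Polynomial (FractionRing T)) (RatFunc (FractionRing T))).comp
      (Polynomial.mapRingHom (algebraMap T (FractionRing T)))
  have hi : (algebraMap (RatFunc (FractionRing T)) (FractionRing (PowerSeries T))).comp i =
      (algebraMap (PowerSeries T) (FractionRing (PowerSeries T))).comp
        (algebraMap (Polynomial T) (PowerSeries T)) := by
    refine RingHom.ext fun q => ?_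
    refine (hψ q).trans ?_
    rw [RingHom.comp_apply, PowerSeries.algebraMap_apply']
    simp
  obtain ⟨hirr, ⟨e⟩⟩ := final_iso (F := RatFunc (FractionRing T)) (K := FractionRing (PowerSeries T))
    (f.map i) (hf.map i) α (by rw [hf.natDegree_map, hn])
    (by rw [Polynomial.eval₂_map, RingHom.comp_assoc, hi]; exact hα) hgen
  haveI : Fact (Irreducible (f.map i)) := ⟨hirr⟩
  refine ⟨AdjoinRoot (f.map i), inferInstance, inferInstance, (hf.map i).finite_adjoinRoot, ⟨?_⟩⟩
  let e0 := Algebra.TensorProduct.comm (RatFunc (FractionRing T))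
    (AdjoinRoot (f.map i)) (FractionRing (PowerSeries T))
  exact AlgEquiv.ofRingEquiv (f := e0.toRingEquiv.trans e.toRingEquiv) (fun r => e.commutes r)
end

section
/- Let k be a field of characteristic 0. Then every finite field extension E of k((x))((t)) is induced by a finite field extension of k((t))(x): there exists a finite field extension E' of the rational function field k((t))(x) such that E' ⊗_{k((t))(x)} k((x))((t)) is isomorphic to E as a k((x))((t))-algebra. -/
open scoped TensorProduct

attribute [local instance] Algebra.TensorProduct.rightAlgebra

/-- The ring homomorphism `k₁((t)) →+* k₂((t))` applying a ring homomorphism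
`f : k₁ →+* k₂` to each coefficient of a Laurent series. -/
noncomputable def lsMap {R S : Type*} [CommRing R] [CommRing S]
    (f : R →+* S) : LaurentSeries R →+* LaurentSeries S where
  toFun x := x.map f
  map_one' := by ext g; by_cases h : g = 0 <;> simp [h]
  map_mul' x y := HahnSeries.map_mul f.toNonUnitalRingHom
  map_zero' := by ext g; simp
  map_add' x y := HahnSeries.map_add f.toAddMonoidHom

/-- A type synonym for the Laurent series field `k((x))`, so that `k((x))((t))` is
`LaurentSeries (Kx k)`. -/
def Kx (k : Type) [Field k] : Type := LaurentSeries k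

noncomputable instance (k : Type) [Field k] : Field (Kx k) :=
  inferInstanceAs (Field (LaurentSeries k))

section aux
open Polynomial

section hens
variable {ℓ B : Type*} [Field ℓ] [CommRing B] [IsDomain B] [Algebra (PowerSeries ℓ) B]
  [Module.Finite (PowerSeries ℓ) B]

theorem adicB : IsAdicComplete
    (Ideal.span {algebraMap (PowerSeries ℓ) B PowerSeries.X}) B := by
  set I : Ideal (PowerSeries ℓ) := Ideal.span {PowerSeries.X} with hI
  have hA : IsAdicComplete I (PowerSeries ℓ) := inferInstance
  have h1 : IsAdicComplete I B := by
    have hH : IsHausdorff I B := IsHausdorff.of_le_jacobson I B (IsAdicComplete.le_jacobson_bot I)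
    rw [← AdicCompletion.of_bijective_iff]
    refine ⟨AdicCompletion.of_injective_iff.2 hH, ?_⟩
    intro z
    obtain ⟨w, rfl⟩ := AdicCompletion.ofTensorProduct_surjective_of_finite I B z
    induction w with
    | zero => exact ⟨0, by simp⟩
    | add a b ha hb =>
      obtain ⟨a', ha'⟩ := ha
      obtain ⟨b', hb'⟩ := hb
      exact ⟨a' + b', by rw [map_add, map_add, ha', hb']⟩
    | tmul r x =>
      obtain ⟨a, rfl⟩ := (AdicCompletion.of_bijective_iff.2 hA).2 r
      refine ⟨a • x, ?_⟩
      rw [AdicCompletion.ofTensorProduct_tmul, map_smul]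
      ext n
      rfl
  have hmap : Ideal.span {algebraMap (PowerSeries ℓ) B PowerSeries.X} = I.map (algebraMap _ B) := by
    rw [hI, Ideal.map_span, Set.image_singleton]
  rw [hmap]
  exact (IsAdicComplete.map_algebraMap_iff I B).2 h1

theorem henselT : HenselianRing B (Ideal.span {algebraMap (PowerSeries ℓ) B PowerSeries.X}) := by
  have := adicB (ℓ := ℓ) (B := B)
  infer_instance

theorem artC : IsArtinianRing (B ⧸ Ideal.span {algebraMap (PowerSeries ℓ) B PowerSeries.X}) := by
  set J := Ideal.span {algebraMap (PowerSeries ℓ) B PowerSeries.X}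
  let : Algebra ℓ (B ⧸ J) := ((algebraMap (PowerSeries ℓ) (B ⧸ J)).comp PowerSeries.C).toAlgebra
  have : Module.Finite ℓ (B ⧸ J) := by
    obtain ⟨s, hs⟩ := (inferInstance : Module.Finite (PowerSeries ℓ) (B ⧸ J)).1
    refine ⟨s, ?_⟩
    rw [eq_top_iff]
    intro x _
    have hx : x ∈ Submodule.span (PowerSeries ℓ) (s : Set (B ⧸ J)) := by rw [hs]; trivial
    induction hx using Submodule.span_induction with
    | mem x h => exact Submodule.subset_span h
    | zero => exact zero_mem _
    | add x y _ _ hx hy => exact add_mem (hx trivial) (hy trivial)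
    | smul a x _ hx =>
      have : a • x = (PowerSeries.constantCoeff a) • x := by
        obtain ⟨c, hc⟩ : PowerSeries.X ∣ a - PowerSeries.C (PowerSeries.constantCoeff a) := by
          rw [PowerSeries.X_dvd_iff]; simp
        have h0 : algebraMap (PowerSeries ℓ) (B ⧸ J) PowerSeries.X = 0 := by
          rw [IsScalarTower.algebraMap_apply (PowerSeries ℓ) B (B ⧸ J)]
          exact Ideal.Quotient.eq_zero_iff_mem.2 (Ideal.mem_span_singleton_self _)
        rw [Algebra.smul_def, Algebra.smul_def]
        congr 1
        rw [← sub_eq_zero]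
        change _ - (algebraMap (PowerSeries ℓ) (B ⧸ J)) (PowerSeries.C _) = 0
        rw [← map_sub, hc, map_mul, h0, zero_mul]
      rw [this]
      exact Submodule.smul_mem _ _ (hx trivial)
  exact IsArtinianRing.of_finite ℓ (B ⧸ J)

theorem unit_or (b : B) : IsUnit b ∨ ∃ n, (algebraMap (PowerSeries ℓ) B PowerSeries.X) ∣ b ^ n := by
  set T := algebraMap (PowerSeries ℓ) B PowerSeries.X with hT
  set J := Ideal.span {T} with hJ
  have hart : IsArtinianRing (B ⧸ J) := artC
  have hH : HenselianRing B J := henselT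
  set q := Ideal.Quotient.mk J
  obtain ⟨n, hn⟩ := IsArtinian.exists_pow_succ_smul_dvd (q b) (1 : B ⧸ J)
  obtain ⟨y, hy⟩ := hn
  -- b^n = b^{n+1} y
  have hy' : q b ^ n = q b ^ n * (q b * y) := by
    simp only [smul_eq_mul, mul_one] at hy
    rw [← mul_assoc, ← pow_succ, hy]
  have hk : ∀ k, q b ^ n = q b ^ n * (q b * y) ^ k := by
    intro k
    induction k with
    | zero => simp
    | succ k ih => rw [pow_succ', ← mul_assoc, ← hy', ← ih]
  set ε := (q b * y) ^ n with hε
  have hidem : ε * ε = ε := by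
    have := hk n
    calc ε * ε = y ^ n * (q b ^ n * (q b * y) ^ n) := by rw [hε]; ring
      _ = y ^ n * q b ^ n := by rw [← hk n]
      _ = ε := by rw [hε]; ring
  obtain ⟨a0, ha0⟩ := Ideal.Quotient.mk_surjective ε
  change q a0 = ε at ha0
  obtain ⟨a, hroot, ha⟩ := hH.is_henselian (X ^ 2 - X) (by monicity!) a0
    (by
      rw [← Ideal.Quotient.eq_zero_iff_mem]
      simp only [eval_sub, eval_pow, eval_X, map_sub, map_pow]
      change q a0 ^ 2 - q a0 = 0
      rw [ha0, pow_two, hidem, sub_self])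
    (by
      simp only [derivative_sub, derivative_X_pow, derivative_X, eval_sub, eval_mul, eval_pow, eval_X, eval_one, eval_C]
      refine IsUnit.of_mul_eq_one (2 * ε - 1) ?_
      simp only [map_sub, map_mul, map_one, map_pow]
      change ((q (2 : ℕ)) * q a0 ^ _ - 1) * _ = 1
      rw [ha0, map_natCast]
      push_cast
      simp only [Nat.reduceSub, pow_one]
      linear_combination 4 * hidem)
  have hqa : q a = ε := by rw [← ha0]; exact Ideal.Quotient.eq.2 ha
  have haa : a = 0 ∨ a = 1 := by
    have : a * (a - 1) = 0 := by
      simp only [IsRoot.def, eval_sub, eval_pow, eval_X] at hroot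
      linear_combination hroot
    rcases mul_eq_zero.1 this with h | h
    · exact Or.inl h
    · exact Or.inr (sub_eq_zero.1 h)
  rcases haa with rfl | rfl
  · right
    refine ⟨n, ?_⟩
    rw [← Ideal.mem_span_singleton, ← Ideal.Quotient.eq_zero_iff_mem, map_pow]
    change q b ^ n = 0
    rw [hk n, ← hε, ← hqa, map_zero, mul_zero]
  · left
    have hloc := isLocalHom_of_le_jacobson_bot J hH.jac
    refine isUnit_of_map_unit q b ?_
    have h1 : q b ^ n * y ^ n = 1 := by rw [← mul_pow, ← hε, ← hqa, map_one]
    by_cases hn0 : n = 0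
    · subst hn0
      refine IsUnit.of_mul_eq_one y ?_
      simpa using hy'.symm
    · exact isUnit_of_dvd_one ((dvd_pow_self _ hn0).trans (Dvd.intro _ h1))

theorem T_mem_jac : Ideal.span {algebraMap (PowerSeries ℓ) B PowerSeries.X} ≤ Ideal.jacobson ⊥ :=
  (henselT (ℓ := ℓ) (B := B)).jac

end hens

theorem localB (ℓ : Type*) {B : Type*} [Field ℓ] [CommRing B] [IsDomain B] [Algebra (PowerSeries ℓ) B]
    [Module.Finite (PowerSeries ℓ) B] : IsLocalRing B := by
  refine IsLocalRing.of_isUnit_or_isUnit_one_sub_self fun b => ?_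
  rcases unit_or (ℓ := ℓ) b with h | ⟨n, h⟩
  · exact Or.inl h
  · right
    have h1 : b ^ n ∈ Ideal.jacobson (⊥ : Ideal B) := T_mem_jac (ℓ := ℓ) (Ideal.mem_span_singleton.2 h)
    have h2 : IsUnit (1 - b ^ n) := by
      have := Ideal.mem_jacobson_bot.1 h1 (-1)
      convert this using 1; ring
    exact isUnit_of_dvd_unit (by simpa using sub_dvd_pow_sub_pow 1 b n) h2

theorem hensB (ℓ : Type*) {B : Type*} [Field ℓ] [CommRing B] [IsDomain B] [Algebra (PowerSeries ℓ) B]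
    [Module.Finite (PowerSeries ℓ) B] : HenselianLocalRing B := by
  have hl : IsLocalRing B := localB ℓ
  set T := algebraMap (PowerSeries ℓ) B PowerSeries.X with hT
  set J := Ideal.span {T} with hJ
  have hH : HenselianRing B J := henselT
  refine { is_henselian := ?_ }
  intro f hf a0 h0 h1
  have hnil : ∀ b ∈ IsLocalRing.maximalIdeal B, IsNilpotent (Ideal.Quotient.mk J b) := by
    intro b hb
    rcases unit_or (ℓ := ℓ) b with h | ⟨n, h⟩
    · exact absurd h hb
    · refine ⟨n, ?_⟩
      rw [← map_pow]
      exact Ideal.Quotient.eq_zero_iff_mem.2 (Ideal.mem_span_singleton.2 h)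
  have hae : ∀ (p : B[X]) (b : B), aeval (Ideal.Quotient.mk J b) p = Ideal.Quotient.mk J (eval b p) := by
    intro p b
    exact aeval_algebraMap_apply_eq_algebraMap_eval b p
  obtain ⟨r, ⟨hr1, hr2⟩, -⟩ := existsUnique_nilpotent_sub_and_aeval_eq_zero (P := f)
    (x := Ideal.Quotient.mk J a0) (by rw [hae]; exact hnil _ h0) (by rw [hae]; exact h1.map _)
  obtain ⟨a1, rfl⟩ := Ideal.Quotient.mk_surjective r
  have hJm : J ≤ IsLocalRing.maximalIdeal B := by
    rw [← IsLocalRing.jacobson_eq_maximalIdeal ⊥ bot_ne_top]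
    exact hH.jac
  have hd : a0 - a1 ∈ IsLocalRing.maximalIdeal B := by
    obtain ⟨n, hn⟩ := hr1
    rw [← map_sub, ← map_pow] at hn
    exact Ideal.IsPrime.mem_of_pow_mem inferInstance n (hJm (Ideal.Quotient.eq_zero_iff_mem.1 hn))
  have hu : IsUnit (f.derivative.eval a1) := by
    by_contra hc
    have hc' : f.derivative.eval a1 ∈ IsLocalRing.maximalIdeal B := hc
    have := Ideal.mem_of_dvd _ (sub_dvd_eval_sub a0 a1 f.derivative) hd
    have := add_mem this hc'
    rw [sub_add_cancel] at this
    exact this h1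
  obtain ⟨a, ha, ha'⟩ := hH.is_henselian f hf a1
    (by rw [← Ideal.Quotient.eq_zero_iff_mem, ← hae]; exact hr2) (hu.map _)
  refine ⟨a, ha, ?_⟩
  have := sub_mem (hJm ha') hd
  convert this using 1; ring


theorem coeffField (ℓ : Type*) {B : Type*} [Field ℓ] [CharZero ℓ] [CommRing B] [IsDomain B]
    [HenselianLocalRing B] [Algebra ℓ B]
    [Module.Finite ℓ (IsLocalRing.ResidueField B)] :
    ∃ σ : IsLocalRing.ResidueField B →ₐ[ℓ] B, ∀ c, IsLocalRing.residue B (σ c) = c := by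
  let pb := Field.powerBasisOfFiniteOfSeparable ℓ (IsLocalRing.ResidueField B)
  obtain ⟨a0, ha0⟩ := IsLocalRing.residue_surjective pb.gen
  let f := (minpoly ℓ pb.gen).map (algebraMap ℓ B)
  have hev : ∀ (p : ℓ[X]) (b : B), IsLocalRing.residue B (eval b (p.map (algebraMap ℓ B))) =
      aeval (IsLocalRing.residue B b) p := by
    intro p b
    rw [eval_map_algebraMap]
    exact (aeval_algebraMap_apply (IsLocalRing.ResidueField B) b p).symm
  obtain ⟨a, ha, ha'⟩ := HenselianLocalRing.is_henselian f
    ((minpoly.monic pb.isIntegral_gen).map _) a0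
    (by rw [← IsLocalRing.residue_eq_zero_iff, hev, ha0, minpoly.aeval])
    (by
      rw [← IsLocalRing.residue_ne_zero_iff_isUnit, derivative_map, hev, ha0]
      exact (Algebra.IsSeparable.isSeparable ℓ pb.gen).aeval_derivative_ne_zero (minpoly.aeval _ _))
  have hag : IsLocalRing.residue B a = pb.gen := by
    rw [← ha0, ← sub_eq_zero, ← map_sub, IsLocalRing.residue_eq_zero_iff]; exact ha'
  let σ := pb.lift a (by rw [← eval_map_algebraMap]; exact ha)
  refine ⟨σ, ?_⟩
  have : (IsScalarTower.toAlgHom ℓ B (IsLocalRing.ResidueField B)).comp σ = AlgHom.id ℓ _ := by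
    refine pb.algHom_ext ?_
    simp only [AlgHom.comp_apply, σ, PowerBasis.lift_gen]
    exact hag
  intro c
  exact DFunLike.congr_fun this c

theorem rootB {κ B : Type*} [CommRing B] [HenselianLocalRing B] [Field κ] (N : ℕ) (hN : IsUnit (N : B))
    (hN0 : N ≠ 0)
    (σ : κ →+* B) (hσ : ∀ b : B, ∃ c, b - σ c ∈ IsLocalRing.maximalIdeal B) (w : B) (hw : IsUnit w) :
    ∃ c v, c ≠ 0 ∧ IsUnit v ∧ w = σ c * v ^ N := by
  obtain ⟨c, hc⟩ := hσ w
  have hc0 : c ≠ 0 := by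
    rintro rfl
    rw [map_zero, sub_zero] at hc
    exact hc hw
  have hcc : σ c * σ c⁻¹ = 1 := by rw [← map_mul, mul_inv_cancel₀ hc0, map_one]
  obtain ⟨v, hv, hv'⟩ := HenselianLocalRing.is_henselian (X ^ N - C (σ c⁻¹ * w)) (monic_X_pow_sub_C _ hN0) 1
    (by
      have := Ideal.mul_mem_left _ (-σ c⁻¹) hc
      convert this using 1
      simp only [eval_sub, eval_pow, eval_X, eval_C, one_pow]
      linear_combination -hcc)
    (by simpa [derivative_X_pow] using hN)
  have hvw : v ^ N = σ c⁻¹ * w := by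
    simpa [sub_eq_zero] using hv
  refine ⟨c, v, hc0, ?_, ?_⟩
  · rw [← isUnit_pow_iff hN0, hvw]
    exact (IsUnit.of_mul_eq_one (σ c) (by rw [mul_comm, hcc])).mul hw
  · rw [hvw, ← mul_assoc, hcc, one_mul]

theorem finiteRes (ℓ : Type*) {B : Type*} [Field ℓ] [CommRing B] [IsLocalRing B]
    [Algebra (PowerSeries ℓ) B] [Module.Finite (PowerSeries ℓ) B] [Algebra ℓ B]
    [IsScalarTower ℓ (PowerSeries ℓ) B]
    [hlies : (IsLocalRing.maximalIdeal B).LiesOver (Ideal.span {(PowerSeries.X : PowerSeries ℓ)})] :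
    Module.Finite ℓ (IsLocalRing.ResidueField B) ∧
    Module.finrank ℓ (IsLocalRing.ResidueField B) =
      Ideal.inertiaDeg' (Ideal.span {(PowerSeries.X : PowerSeries ℓ)}) (IsLocalRing.maximalIdeal B) := by
  set p := Ideal.span {(PowerSeries.X : PowerSeries ℓ)} with hp
  have : p.IsPrime := PowerSeries.span_X_isPrime
  rw [Ideal.inertiaDeg'_algebraMap]
  have hbij : Function.Bijective (algebraMap ℓ (PowerSeries ℓ ⧸ p)) := by
    refine ⟨(algebraMap ℓ (PowerSeries ℓ ⧸ p)).injective, ?_⟩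
    intro z
    obtain ⟨a, rfl⟩ := Ideal.Quotient.mk_surjective z
    refine ⟨PowerSeries.constantCoeff a, ?_⟩
    rw [IsScalarTower.algebraMap_apply ℓ (PowerSeries ℓ) (PowerSeries ℓ ⧸ p)]
    refine Ideal.Quotient.eq.2 ?_
    rw [hp, Ideal.mem_span_singleton, PowerSeries.X_dvd_iff]
    simp
  let i := RingEquiv.ofBijective _ hbij
  have hcomm : (algebraMap (PowerSeries ℓ ⧸ p) (B ⧸ IsLocalRing.maximalIdeal B)).comp i.toRingHom =
      (RingEquiv.refl (B ⧸ IsLocalRing.maximalIdeal B)).toRingHom.comp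
        (algebraMap ℓ (B ⧸ IsLocalRing.maximalIdeal B)) := by
    ext a
    change (algebraMap (PowerSeries ℓ ⧸ p) (B ⧸ IsLocalRing.maximalIdeal B)) (algebraMap ℓ (PowerSeries ℓ ⧸ p) a) = algebraMap ℓ (B ⧸ IsLocalRing.maximalIdeal B) a
    rw [IsScalarTower.algebraMap_apply ℓ (PowerSeries ℓ) (PowerSeries ℓ ⧸ p)]
    rw [IsScalarTower.algebraMap_apply ℓ B (B ⧸ _), IsScalarTower.algebraMap_apply ℓ (PowerSeries ℓ) B]
    rfl
  constructor
  · have h1 : Module.Finite (PowerSeries ℓ ⧸ p) (B ⧸ IsLocalRing.maximalIdeal B) :=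
      Module.Finite.of_restrictScalars_finite (PowerSeries ℓ) _ _
    change Module.Finite ℓ (B ⧸ IsLocalRing.maximalIdeal B)
    refine Module.Finite.of_equiv_equiv (B₁ := B ⧸ IsLocalRing.maximalIdeal B) (A₁ := PowerSeries ℓ ⧸ p) i.symm (RingEquiv.refl _) ?_
    ext a
    have := RingHom.congr_fun hcomm (i.symm a)
    simpa using this.symm
  · exact Algebra.finrank_eq_of_equiv_equiv (R₁ := PowerSeries ℓ ⧸ p) (S₁ := B ⧸ IsLocalRing.maximalIdeal B) i (RingEquiv.refl _) hcomm

theorem structB (ℓ : Type) [Field ℓ] [CharZero ℓ] (E : Type) [Field E]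
    [Algebra (LaurentSeries ℓ) E] [FiniteDimensional (LaurentSeries ℓ) E]
    [Algebra (PowerSeries ℓ) E] [IsScalarTower (PowerSeries ℓ) (LaurentSeries ℓ) E]
    (B : Type) [CommRing B] [IsDomain B] [IsDedekindDomain B] [Algebra (PowerSeries ℓ) B]
    [Module.Finite (PowerSeries ℓ) B] [Algebra B E] [IsScalarTower (PowerSeries ℓ) B E]
    [IsFractionRing B E] [Algebra ℓ B] [IsScalarTower ℓ (PowerSeries ℓ) B]
    [IsIntegralClosure B (PowerSeries ℓ) E] :
    ∃ (κ : Type) (_ : Field κ) (_ : Algebra ℓ κ) (σ : κ →+* E) (e : ℕ),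
      FiniteDimensional ℓ κ ∧ 0 < e ∧
      (∀ a, σ (algebraMap ℓ κ a) = algebraMap (LaurentSeries ℓ) E (HahnSeries.C a)) ∧
      Module.finrank ℓ κ * e = Module.finrank (LaurentSeries ℓ) E ∧
      (∃ s u, u ≠ 0 ∧ s ^ e = σ u * algebraMap (LaurentSeries ℓ) E (HahnSeries.single (1 : ℤ) (1 : ℓ))) ∧
      ∀ s u, u ≠ 0 →
        s ^ e = σ u * algebraMap (LaurentSeries ℓ) E (HahnSeries.single (1 : ℤ) (1 : ℓ)) →
        (∀ w : E, w ≠ 0 → ∀ N : ℕ, 0 < N → ∃ (c : κ) (m : ℤ) (v : E), c ≠ 0 ∧ v ≠ 0 ∧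
          w = σ c * s ^ m * v ^ N) ∧
        (∀ S : Subalgebra (LaurentSeries ℓ) E, (∀ c, σ c ∈ S) → s ∈ S → S = ⊤) := by
  have hHens : HenselianLocalRing B := hensB ℓ
  set p := Ideal.span {(PowerSeries.X : PowerSeries ℓ)} with hp
  have hpm : p.IsMaximal := by
    rw [hp, ← PowerSeries.maximalIdeal_eq_span_X]; infer_instance
  have hp0 : p ≠ ⊥ := by
    rw [hp, Ne, Ideal.span_singleton_eq_bot]; exact PowerSeries.X_ne_zero
  have hinj : Function.Injective (algebraMap (PowerSeries ℓ) B) := by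
    have h1 : Function.Injective (algebraMap (PowerSeries ℓ) E) := by
      rw [IsScalarTower.algebraMap_eq (PowerSeries ℓ) (LaurentSeries ℓ) E]
      exact (algebraMap (LaurentSeries ℓ) E).injective.comp (IsFractionRing.injective _ _)
    rw [IsScalarTower.algebraMap_eq (PowerSeries ℓ) B E] at h1
    exact Function.Injective.of_comp h1
  have hfaith : FaithfulSMul (PowerSeries ℓ) B := (faithfulSMul_iff_algebraMap_injective _ _).2 hinj
  set m := IsLocalRing.maximalIdeal B with hm
  set T := algebraMap (PowerSeries ℓ) B PowerSeries.X with hT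
  have hTm : T ∈ m := by
    rw [hm, ← IsLocalRing.jacobson_eq_maximalIdeal ⊥ bot_ne_top]
    exact T_mem_jac (ℓ := ℓ) (B := B) (Ideal.mem_span_singleton_self _)
  have hT0 : T ≠ 0 := by
    rw [hT, Ne, map_eq_zero_iff _ hinj]; exact PowerSeries.X_ne_zero
  have hTE : algebraMap B E T = algebraMap (LaurentSeries ℓ) E (HahnSeries.single (1 : ℤ) (1 : ℓ)) := by
    rw [hT, ← IsScalarTower.algebraMap_apply (PowerSeries ℓ) B E,
      IsScalarTower.algebraMap_apply (PowerSeries ℓ) (LaurentSeries ℓ) E]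
    congr 1
    exact HahnSeries.ofPowerSeries_X
  rw [← hTE]
  have hlies : m.LiesOver p := by
    refine ⟨?_⟩
    refine hpm.eq_of_le (Ideal.IsPrime.ne_top inferInstance) ?_
    rw [hp, Ideal.span_le, Set.singleton_subset_iff]
    exact hTm
  obtain ⟨hfin, hrank⟩ := finiteRes ℓ (B := B)
  obtain ⟨σ, hσ⟩ := coeffField ℓ (B := B)
  have hσ' : ∀ b : B, ∃ c, b - σ.toRingHom c ∈ m := by
    intro b
    refine ⟨IsLocalRing.residue B b, ?_⟩
    rw [hm, ← IsLocalRing.residue_eq_zero_iff, map_sub, sub_eq_zero]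
    exact (hσ _).symm
  have hnf : ¬ IsField B := by
    intro h
    have := (IsLocalRing.isField_iff_maximalIdeal_eq.1 h)
    rw [← hm] at this
    rw [this] at hTm
    exact hT0 (by simpa using hTm)
  have hdvr : IsDiscreteValuationRing B :=
    ((IsDiscreteValuationRing.TFAE B hnf).out 0 2).2 (inferInstance : IsDedekindDomain B)
  obtain ⟨ϖ, hϖ⟩ := IsDiscreteValuationRing.exists_irreducible B
  obtain ⟨e, w, hw⟩ := IsDiscreteValuationRing.eq_unit_mul_pow_irreducible hT0 hϖ
  have hmϖ : m = Ideal.span {ϖ} := hϖ.maximalIdeal_eq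
  have he : 0 < e := by
    rcases Nat.eq_zero_or_pos e with rfl | h
    · exfalso
      rw [pow_zero, mul_one] at hw
      exact hTm (hw ▸ w.isUnit)
    · exact h
  have hmap : p.map (algebraMap (PowerSeries ℓ) B) = m ^ e := by
    rw [hp, Ideal.map_span, Set.image_singleton, hmϖ, Ideal.span_singleton_pow,
      Ideal.span_singleton_eq_span_singleton]
    change Associated T _
    rw [hw]
    exact (associated_unit_mul_left _ _ w.isUnit)
  have hNu : ∀ N : ℕ, N ≠ 0 → IsUnit (N : B) := by
    intro N hN
    have : (N : B) = algebraMap ℓ B N := by simp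
    rw [this]
    exact (IsUnit.mk0 (N : ℓ) (by exact_mod_cast hN)).map _
  have hϖE : algebraMap B E ϖ ≠ 0 := by
    rw [Ne, map_eq_zero_iff _ (IsFractionRing.injective B E)]; exact hϖ.ne_zero
  refine ⟨IsLocalRing.ResidueField B, inferInstance, inferInstance,
    (algebraMap B E).comp σ.toRingHom, e, hfin, he, ?_, ?_, ?_, ?_⟩
  · intro a
    have h1 : σ.toRingHom (algebraMap ℓ (IsLocalRing.ResidueField B) a) = algebraMap ℓ B a := σ.commutes a
    rw [RingHom.comp_apply, h1, IsScalarTower.algebraMap_apply ℓ (PowerSeries ℓ) B,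
      ← IsScalarTower.algebraMap_apply (PowerSeries ℓ) B E,
      IsScalarTower.algebraMap_apply (PowerSeries ℓ) (LaurentSeries ℓ) E]
    congr 1
    exact HahnSeries.ofPowerSeries_C a
  · rw [hrank, mul_comm]
    have := Ideal.ramificationIdx_mul_inertiaDeg_of_isLocalRing B (LaurentSeries ℓ) E hp0
    rw [← this]
    congr 1
    symm
    refine Ideal.ramificationIdx'_spec hmap.le ?_
    rw [hmap]
    intro hle
    have : m ^ (e + 1) = m ^ e := le_antisymm (Ideal.pow_le_pow_right (Nat.le_succ e)) hle
    rw [hmϖ, Ideal.span_singleton_pow, Ideal.span_singleton_pow,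
      Ideal.span_singleton_eq_span_singleton] at this
    have h2 := this.dvd
    rw [pow_succ] at h2
    have h3 : ϖ ∣ 1 := by
      have : ϖ ^ e * ϖ ∣ ϖ ^ e * 1 := by simpa using h2
      exact (mul_dvd_mul_iff_left (pow_ne_zero e hϖ.ne_zero)).1 this
    exact hϖ.not_isUnit (isUnit_of_dvd_one h3)
  · obtain ⟨c, v, hc, hv, hwv⟩ := rootB e (hNu e he.ne') he.ne' σ.toRingHom hσ' w w.isUnit
    refine ⟨algebraMap B E (v * ϖ), c⁻¹, inv_ne_zero hc, ?_⟩
    rw [hw, hwv]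
    have hcc : σ.toRingHom c⁻¹ * σ.toRingHom c = 1 := by rw [← map_mul, inv_mul_cancel₀ hc, map_one]
    rw [RingHom.comp_apply, ← map_mul, ← map_pow]
    congr 1
    linear_combination (-v ^ e * ϖ ^ e) * hcc
  · intro s u hu hs
    -- s = ε ϖ
    have hσu : IsUnit (σ.toRingHom u) := (IsUnit.mk0 u hu).map _
    obtain ⟨ε, hε, hεs⟩ : ∃ ε : B, IsUnit ε ∧ s = algebraMap B E (ε * ϖ) := by
      have h1 : (s / algebraMap B E ϖ) ^ e = algebraMap B E (σ.toRingHom u * w) := by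
        rw [div_pow, hs, hw, div_eq_iff (pow_ne_zero _ hϖE), RingHom.comp_apply]
        simp only [map_mul, map_pow]
        ring
      have h2 : IsIntegral B (s / algebraMap B E ϖ) := by
        refine IsIntegral.of_pow he ?_
        rw [h1]; exact isIntegral_algebraMap
      obtain ⟨ε, hε⟩ := IsIntegrallyClosed.isIntegral_iff.1 h2
      refine ⟨ε, ?_, ?_⟩
      · rw [← hε, ← map_pow] at h1
        have := IsFractionRing.injective B E h1
        rw [← isUnit_pow_iff he.ne', this]
        exact hσu.mul w.isUnit
      · rw [map_mul, hε, div_mul_cancel₀ _ hϖE]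
    have hs0 : s ≠ 0 := by
      rw [hεs, Ne, map_eq_zero_iff _ (IsFractionRing.injective B E)]
      exact mul_ne_zero hε.ne_zero hϖ.ne_zero
    refine ⟨?_, ?_⟩
    · have key : ∀ b : B, b ≠ 0 → ∀ N : ℕ, 0 < N → ∃ (c : IsLocalRing.ResidueField B) (n : ℤ) (v : E),
          c ≠ 0 ∧ v ≠ 0 ∧ algebraMap B E b = ((algebraMap B E).comp σ.toRingHom) c * s ^ n * v ^ N := by
        intro b hb N hN
        obtain ⟨n, w', hw'⟩ := IsDiscreteValuationRing.eq_unit_mul_pow_irreducible hb hϖ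
        obtain ⟨ε', rfl⟩ := hε
        obtain ⟨c, v, hc, hv, hwv⟩ := rootB N (hNu N hN.ne') hN.ne' σ.toRingHom hσ'
          ((w' * (ε'⁻¹) ^ n : Bˣ) : B) (Units.isUnit _)
        refine ⟨c, n, algebraMap B E v, hc, ?_, ?_⟩
        · exact (hv.map (algebraMap B E)).ne_zero
        · rw [RingHom.comp_apply, zpow_natCast, hεs, ← map_pow, ← map_pow, ← map_mul, ← map_mul]
          congr 1
          have : b = (w' * (ε'⁻¹) ^ n : Bˣ) * (ε' * ϖ) ^ n := by
            rw [hw', mul_pow, Units.val_mul, Units.val_pow_eq_pow_val]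
            have h3 : (((ε'⁻¹ : Bˣ) : B)) ^ n * (ε' : B) ^ n = 1 := by
              rw [← mul_pow, Units.inv_mul, one_pow]
            linear_combination (-(w' : B) * ϖ ^ n) * h3
          rw [this, hwv]; ring
      intro z hz N hN
      obtain ⟨b1, b2, hb2, rfl⟩ := IsFractionRing.div_surjective (A := B) z
      have hb2' : b2 ≠ 0 := nonZeroDivisors.ne_zero hb2
      have hb1' : b1 ≠ 0 := by rintro rfl; simp at hz
      obtain ⟨c1, n1, v1, hc1, hv1, h1⟩ := key b1 hb1' N hN
      obtain ⟨c2, n2, v2, hc2, hv2, h2⟩ := key b2 hb2' N hN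
      refine ⟨c1 / c2, n1 - n2, v1 / v2, div_ne_zero hc1 hc2, div_ne_zero hv1 hv2, ?_⟩
      rw [h1, h2, map_div₀, zpow_sub₀ hs0, div_pow]
      field_simp
    · intro S hσS hsS
      let M : Submodule (PowerSeries ℓ) B :=
        { carrier := {b | algebraMap B E b ∈ S}
          add_mem' := fun {a b} ha hb => by
            simp only [Set.mem_setOf_eq] at *
            rw [map_add]; exact add_mem ha hb
          zero_mem' := by simp [zero_mem]
          smul_mem' := fun a b hb => by
            simp only [Set.mem_setOf_eq] at *
            rw [Algebra.smul_def, map_mul, ← IsScalarTower.algebraMap_apply (PowerSeries ℓ) B E,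
              IsScalarTower.algebraMap_apply (PowerSeries ℓ) (LaurentSeries ℓ) E]
            exact mul_mem (S.algebraMap_mem _) hb }
      have hM : ∀ b, b ∈ M ↔ algebraMap B E b ∈ S := fun b => Iff.rfl
      have hstep : ∀ n : ℕ, ∀ b : B, ∃ a ∈ M, ∃ d, b = a + (ε * ϖ) ^ n * d := by
        intro n
        induction n with
        | zero => intro b; exact ⟨0, zero_mem _, b, by simp⟩
        | succ n ih =>
          intro b
          obtain ⟨a, ha, d, rfl⟩ := ih b
          obtain ⟨c, hc⟩ := hσ' d
          rw [hmϖ, Ideal.mem_span_singleton] at hc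
          obtain ⟨d', hd'⟩ := hc
          obtain ⟨ε', rfl⟩ := hε
          refine ⟨a + ((ε' : B) * ϖ) ^ n * σ.toRingHom c, ?_, ((ε'⁻¹ : Bˣ) : B) * d', ?_⟩
          · refine add_mem ha ?_
            rw [hM, map_mul, map_pow, ← hεs]
            exact mul_mem (pow_mem hsS n) (hσS c)
          · have h3 : (ε' : B) * ((ε'⁻¹ : Bˣ) : B) = 1 := Units.mul_inv _
            linear_combination ((ε' : B) * ϖ) ^ n * hd' - ((ε' : B) * ϖ) ^ n * ϖ * d' * h3
      have htop : (⊤ : Submodule (PowerSeries ℓ) B) ≤ M := by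
        refine Submodule.le_of_le_smul_of_le_jacobson_bot (I := p) Module.Finite.fg_top ?_ ?_
        · have : IsAdicComplete p (PowerSeries ℓ) := by rw [hp]; infer_instance
          exact IsAdicComplete.le_jacobson_bot p
        · intro b _
          obtain ⟨a, ha, d, rfl⟩ := hstep e b
          refine Submodule.add_mem_sup ha ?_
          have h4 : (ε * ϖ) ^ e = σ.toRingHom u * T := by
            apply IsFractionRing.injective B E
            rw [map_pow, ← hεs, hs, map_mul]; rfl
          have h5 : (ε * ϖ) ^ e * d = (PowerSeries.X : PowerSeries ℓ) • (σ.toRingHom u * d) := by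
            rw [h4, Algebra.smul_def]; ring
          rw [h5]
          exact Submodule.smul_mem_smul (Ideal.mem_span_singleton_self _) trivial
      rw [eq_top_iff]
      intro z _
      have halg : Algebra.IsAlgebraic (PowerSeries ℓ) E :=
        (IsFractionRing.comap_isAlgebraic_iff (A := PowerSeries ℓ) (K := LaurentSeries ℓ) (C := E)).2 inferInstance
      obtain ⟨y, hy0, hy⟩ := (halg.isAlgebraic z).exists_integral_multiple
      obtain ⟨b, hb⟩ := (IsIntegralClosure.isIntegral_iff (A := B)).1 hy
      have hbS : algebraMap B E b ∈ S := htop (Submodule.mem_top (x := b))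
      have hyE : algebraMap (LaurentSeries ℓ) E (algebraMap _ _ y) ≠ 0 := by
        rw [Ne, map_eq_zero_iff _ (algebraMap (LaurentSeries ℓ) E).injective,
          map_eq_zero_iff _ (IsFractionRing.injective (PowerSeries ℓ) (LaurentSeries ℓ))]
        exact hy0
      have hz : z = algebraMap (LaurentSeries ℓ) E (algebraMap _ _ y)⁻¹ * algebraMap B E b := by
        rw [hb, Algebra.smul_def, IsScalarTower.algebraMap_apply (PowerSeries ℓ) (LaurentSeries ℓ) E,
          map_inv₀, inv_mul_cancel_left₀ hyE]
      rw [hz]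
      exact mul_mem (S.algebraMap_mem _) hbS

theorem structE (ℓ : Type) [Field ℓ] [CharZero ℓ] (E : Type) [Field E]
    [Algebra (LaurentSeries ℓ) E] [FiniteDimensional (LaurentSeries ℓ) E] :
    ∃ (κ : Type) (_ : Field κ) (_ : Algebra ℓ κ) (σ : κ →+* E) (e : ℕ),
      FiniteDimensional ℓ κ ∧ 0 < e ∧
      (∀ a, σ (algebraMap ℓ κ a) = algebraMap (LaurentSeries ℓ) E (HahnSeries.C a)) ∧
      Module.finrank ℓ κ * e = Module.finrank (LaurentSeries ℓ) E ∧
      (∃ s u, u ≠ 0 ∧ s ^ e = σ u * algebraMap (LaurentSeries ℓ) E (HahnSeries.single (1 : ℤ) (1 : ℓ))) ∧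
      ∀ s u, u ≠ 0 →
        s ^ e = σ u * algebraMap (LaurentSeries ℓ) E (HahnSeries.single (1 : ℤ) (1 : ℓ)) →
        (∀ w : E, w ≠ 0 → ∀ N : ℕ, 0 < N → ∃ (c : κ) (m : ℤ) (v : E), c ≠ 0 ∧ v ≠ 0 ∧
          w = σ c * s ^ m * v ^ N) ∧
        (∀ S : Subalgebra (LaurentSeries ℓ) E, (∀ c, σ c ∈ S) → s ∈ S → S = ⊤) := by
  letI : Algebra (PowerSeries ℓ) E :=
    ((algebraMap (LaurentSeries ℓ) E).comp (algebraMap (PowerSeries ℓ) (LaurentSeries ℓ))).toAlgebra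
  haveI : IsScalarTower (PowerSeries ℓ) (LaurentSeries ℓ) E := IsScalarTower.of_algebraMap_eq' rfl
  haveI : CharZero (LaurentSeries ℓ) :=
    charZero_of_injective_ringHom (HahnSeries.C_injective (Γ := ℤ) (R := ℓ))
  let B := integralClosure (PowerSeries ℓ) E
  haveI : Module.Finite (PowerSeries ℓ) B :=
    IsIntegralClosure.finite (PowerSeries ℓ) (LaurentSeries ℓ) E B
  haveI : IsFractionRing B E :=
    integralClosure.isFractionRing_of_finite_extension (LaurentSeries ℓ) E
  haveI : IsDedekindDomain B := integralClosure.isDedekindDomain (PowerSeries ℓ) (LaurentSeries ℓ) E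
  letI : Algebra ℓ B := ((algebraMap (PowerSeries ℓ) B).comp (algebraMap ℓ (PowerSeries ℓ))).toAlgebra
  haveI : IsScalarTower ℓ (PowerSeries ℓ) B := IsScalarTower.of_algebraMap_eq' rfl
  exact structB ℓ E B

theorem extend_step {F E : Type*} [Field F] [Field E] [Algebra F E] (M : IntermediateField F E)
    [FiniteDimensional F M] (z : E) (n : ℕ) (f : M[X]) (hf : f.Monic) (hn : f.natDegree ≤ n)
    (hz : aeval z f = 0) :
    ∃ M' : IntermediateField F E, M ≤ M' ∧ z ∈ M' ∧ FiniteDimensional F M' ∧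
      Module.finrank F M' ≤ Module.finrank F M * n := by
  have hint : IsIntegral M z := ⟨f, hf, hz⟩
  let N : IntermediateField M E := IntermediateField.adjoin M {z}
  have hfin : FiniteDimensional M N := IntermediateField.adjoin.finiteDimensional hint
  have hdeg : Module.finrank M N ≤ n := by
    rw [IntermediateField.adjoin.finrank hint]
    exact (natDegree_le_of_dvd (minpoly.dvd M z hz) hf.ne_zero).trans hn
  refine ⟨N.restrictScalars F, ?_, ?_, ?_, ?_⟩
  · intro x hx
    exact N.algebraMap_mem ⟨x, hx⟩
  · exact IntermediateField.mem_adjoin_simple_self M z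
  · exact (Module.Finite.trans M N : Module.Finite F N)
  · have hfree : Module.Free M N := Module.Free.of_divisionRing M N
    have := Module.finrank_mul_finrank F M N
    change Module.finrank F N ≤ _
    rw [← this]
    exact Nat.mul_le_mul_left _ hdeg

theorem smallField {k F E κ : Type*} [Field k] [CharZero k] [Field F] [Field E] [Algebra F E] [Field κ]
    [Algebra k κ] [FiniteDimensional k κ] (i : k →+* F) (τ : κ →+* E)
    (hτ : ∀ a, τ (algebraMap k κ a) = algebraMap F E (i a))
    (e₁ e₂ : ℕ) (he₁ : 0 < e₁) (he₂ : 0 < e₂) (y s : E) (x t : F) (c c' : κ) (m : ℤ)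
    (hy : y ^ e₂ = τ c * algebraMap F E x)
    (hs : s ^ e₁ = τ c' * y ^ m * algebraMap F E t) :
    ∃ M : IntermediateField F E, (∀ a, τ a ∈ M) ∧ y ∈ M ∧ s ∈ M ∧ FiniteDimensional F M ∧
      Module.finrank F M ≤ Module.finrank k κ * e₂ * e₁ := by
  let pb := Field.powerBasisOfFiniteOfSeparable k κ
  have haev : ∀ p : k[X], ∀ b : κ, τ (aeval b p) =
      aeval (τ b) ((p.map i).map (algebraMap F (⊥ : IntermediateField F E))) := by
    intro p b
    rw [aeval_map_algebraMap, aeval_def, aeval_def, hom_eval₂, eval₂_map]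
    congr 1
    ext a
    exact hτ a
  obtain ⟨M₀, -, hβ, hf₀, hr₀⟩ := extend_step (⊥ : IntermediateField F E) (τ pb.gen)
    (Module.finrank k κ) (((minpoly k pb.gen).map i).map (algebraMap F (⊥ : IntermediateField F E)))
    (((minpoly.monic pb.isIntegral_gen).map _).map _)
    (by rw [natDegree_map, natDegree_map, pb.natDegree_minpoly, pb.finrank])
    (by rw [← haev, minpoly.aeval, map_zero])
  have hτM : ∀ a, τ a ∈ M₀ := by
    intro a
    obtain ⟨p, rfl⟩ := pb.exists_eq_aeval' a
    rw [haev, aeval_map_algebraMap]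
    have h := Subalgebra.aeval_coe M₀.toSubalgebra ⟨_, hβ⟩ (p.map i)
    change aeval (τ pb.gen) (p.map i) = _ at h
    rw [h]
    exact Subtype.prop (aeval (⟨_, hβ⟩ : M₀.toSubalgebra) (p.map i))
  have step : ∀ (M : IntermediateField F E) [FiniteDimensional F M] (z : E) (n : ℕ) (a : E),
      0 < n → a ∈ M → z ^ n = a → ∃ M' : IntermediateField F E, M ≤ M' ∧ z ∈ M' ∧
        FiniteDimensional F M' ∧ Module.finrank F M' ≤ Module.finrank F M * n := by
    intro M _ z n a hn ha hz
    refine extend_step M z n (X ^ n - C ⟨a, ha⟩) (monic_X_pow_sub_C _ hn.ne')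
      (natDegree_X_pow_sub_C).le ?_
    rw [map_sub, map_pow, aeval_X, aeval_C, hz]
    exact sub_self a
  obtain ⟨M₁, h₀₁, hyM, hf₁, hr₁⟩ := step M₀ y e₂ _ he₂
    (mul_mem (hτM c) (M₀.algebraMap_mem x)) hy
  obtain ⟨M₂, h₁₂, hsM, hf₂, hr₂⟩ := step M₁ s e₁ _ he₁
    (mul_mem (mul_mem (h₀₁ (hτM c')) (zpow_mem hyM m)) (M₁.algebraMap_mem t)) hs
  refine ⟨M₂, fun a => h₁₂ (h₀₁ (hτM a)), h₁₂ hyM, hsM, hf₂, ?_⟩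
  rw [IntermediateField.finrank_bot, one_mul] at hr₀
  calc _ ≤ _ := hr₂
    _ ≤ _ := Nat.mul_le_mul_right _ (hr₁.trans (Nat.mul_le_mul_right _ hr₀))

theorem tensorIso {F K E : Type*} [Field F] [Field K] [Field E] [Algebra F K] [Algebra K E]
    [Algebra F E] [IsScalarTower F K E] [FiniteDimensional K E] (M : IntermediateField F E)
    [FiniteDimensional F M] (hr : Module.finrank F M ≤ Module.finrank K E)
    (hgen : ∀ S : Subalgebra K E, (∀ a ∈ M, a ∈ S) → S = ⊤) :
    Nonempty ((M ⊗[F] K) ≃ₐ[K] E) := by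
  letI : Module K (M ⊗[F] K) := (Algebra.TensorProduct.rightAlgebra : Algebra K (M ⊗[F] K)).toModule
  let φ₀ : (M ⊗[F] K) →ₐ[F] E :=
    Algebra.TensorProduct.productMap M.val (IsScalarTower.toAlgHom F K E)
  let φ : (M ⊗[F] K) →ₐ[K] E :=
    { φ₀.toRingHom with
      commutes' := fun r => by
        change φ₀ (1 ⊗ₜ r) = _
        simp [φ₀] }
  have hsurj : Function.Surjective φ := by
    rw [← AlgHom.range_eq_top]
    refine hgen _ fun a ha => ⟨(⟨a, ha⟩ : M) ⊗ₜ 1, ?_⟩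
    change φ₀ _ = _
    simp [φ₀]
  have e : (K ⊗[F] M) ≃ₗ[K] (M ⊗[F] K) :=
    { (TensorProduct.comm F K M) with
      map_smul' := fun r z => by
        change TensorProduct.comm F K M (r • z) = r • TensorProduct.comm F K M z
        induction z with
        | zero => simp
        | add a b ha hb => simp only [smul_add, map_add, ha, hb]
        | tmul a b =>
          rw [TensorProduct.smul_tmul', TensorProduct.comm_tmul, TensorProduct.comm_tmul,
            Algebra.smul_def]
          change _ = ((1 : M) ⊗ₜ[F] r) * _
          rw [Algebra.TensorProduct.tmul_mul_tmul, one_mul]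
          rfl }
  have hfin : FiniteDimensional K (M ⊗[F] K) := Module.Finite.equiv e
  have hrk : Module.finrank K (M ⊗[F] K) = Module.finrank F M := by
    rw [← e.finrank_eq, Module.finrank_baseChange]
  have hle := φ.toLinearMap.finrank_le_finrank_of_surjective hsurj
  have heq : Module.finrank K (M ⊗[F] K) = Module.finrank K E := le_antisymm (hrk.le.trans hr) hle
  have hinj : Function.Injective φ :=
    (LinearMap.injective_iff_surjective_of_finrank_eq_finrank heq (f := φ.toLinearMap)).2 hsurj
  exact ⟨AlgEquiv.ofBijective φ ⟨hinj, hsurj⟩⟩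

end aux

theorem branch_descent_char_zero
    (k : Type) [Field k] [CharZero k]
    (ψ : RatFunc (LaurentSeries k) →+* LaurentSeries (Kx k))
    (hψC : ∀ a : LaurentSeries k,
      ψ (RatFunc.C a) = lsMap ((HahnSeries.C : k →+* Kx k)) a)
    (hψX : ψ RatFunc.X = HahnSeries.C ((HahnSeries.single (1 : ℤ) (1 : k) : Kx k)))
    (E : Type) [Field E] [Algebra (LaurentSeries (Kx k)) E]
    [FiniteDimensional (LaurentSeries (Kx k)) E] :
    letI : Algebra (RatFunc (LaurentSeries k)) (LaurentSeries (Kx k)) := ψ.toAlgebra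
    ∃ (E' : Type) (_ : Field E') (_ : Algebra (RatFunc (LaurentSeries k)) E'),
      FiniteDimensional (RatFunc (LaurentSeries k)) E' ∧
      Nonempty ((E' ⊗[RatFunc (LaurentSeries k)] LaurentSeries (Kx k))
        ≃ₐ[LaurentSeries (Kx k)] E) := by
  letI : Algebra (RatFunc (LaurentSeries k)) (LaurentSeries (Kx k)) := ψ.toAlgebra
  have hC0 : CharZero (LaurentSeries k) :=
    charZero_of_injective_ringHom (HahnSeries.C_injective (Γ := ℤ) (R := k))
  haveI : CharZero (Kx k) := hC0
  obtain ⟨κ₁, _, _, σ₁, e₁, hfin₁, he₁, hσ₁, hr₁, ⟨s₁, u₁, hu₁, hs₁⟩, hall₁⟩ := structE (Kx k) E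
  letI algκ : Algebra (LaurentSeries k) κ₁ := ‹Algebra (Kx k) κ₁›
  haveI : FiniteDimensional (LaurentSeries k) κ₁ := hfin₁
  have hrκ : Module.finrank (LaurentSeries k) κ₁ = Module.finrank (Kx k) κ₁ := rfl
  have hσ₁' : ∀ a : LaurentSeries k, σ₁ (algebraMap (LaurentSeries k) κ₁ a) =
    algebraMap (LaurentSeries (Kx k)) E (HahnSeries.C (a : Kx k)) := hσ₁
  obtain ⟨κ₂, _, _, σ₂, e₂, hfin₂, he₂, hσ₂, hr₂, ⟨y, u₂, hu₂, hy⟩, hall₂⟩ := structE k κ₁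
  obtain ⟨hdec₂, hgen₂⟩ := hall₂ y u₂ hu₂ hy
  obtain ⟨c, m, v, hc, hv, huv⟩ := hdec₂ u₁ hu₁ e₁ he₁
  have hσv : σ₁ v ≠ 0 := by rwa [Ne, map_eq_zero]
  have hy0 : y ≠ 0 := by
    rintro rfl
    rw [zero_pow he₂.ne'] at hy
    have h1 : (HahnSeries.single (1 : ℤ) (1 : k)) ≠ 0 := by simp
    rcases mul_eq_zero.1 hy.symm with h | h
    · exact hu₂ ((map_eq_zero _).1 h)
    · exact h1 ((map_eq_zero _).1 h)
  let s := s₁ / σ₁ v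
  have hs : s ^ e₁ = σ₁ (σ₂ c * y ^ m) *
      algebraMap (LaurentSeries (Kx k)) E (HahnSeries.single (1 : ℤ) (1 : Kx k)) := by
    simp only [s]
    rw [div_pow, hs₁, huv, div_eq_iff (pow_ne_zero _ hσv), map_mul σ₁ _ (v ^ e₁), map_pow]
    ring
  obtain ⟨-, hgen₁⟩ := hall₁ s _
    (mul_ne_zero (by rwa [Ne, map_eq_zero]) (zpow_ne_zero m hy0)) hs
  letI : Algebra (RatFunc (LaurentSeries k)) E :=
    ((algebraMap (LaurentSeries (Kx k)) E).comp ψ).toAlgebra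
  haveI : IsScalarTower (RatFunc (LaurentSeries k)) (LaurentSeries (Kx k)) E :=
    IsScalarTower.of_algebraMap_eq' rfl
  have hmapE : ∀ f, algebraMap (RatFunc (LaurentSeries k)) E f =
    algebraMap (LaurentSeries (Kx k)) E (ψ f) := fun f => rfl
  have hlsC : ∀ a : k, lsMap (HahnSeries.C : k →+* Kx k) (HahnSeries.C a) =
      HahnSeries.C ((HahnSeries.C a : LaurentSeries k) : Kx k) := by
    intro a
    exact HahnSeries.map_C a _
  have hlsT : lsMap (HahnSeries.C : k →+* Kx k) (HahnSeries.single (1 : ℤ) (1 : k)) =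
      HahnSeries.single (1 : ℤ) (1 : Kx k) := by
    ext1
    funext n
    change (HahnSeries.C : k →+* Kx k) ((HahnSeries.single (1:ℤ) (1:k)).coeff n) =
      (HahnSeries.single (1:ℤ) (1:Kx k)).coeff n
    by_cases h : n = 1
    · subst h
      rw [HahnSeries.coeff_single_same, HahnSeries.coeff_single_same, map_one]
      rfl
    · rw [HahnSeries.coeff_single_of_ne h, HahnSeries.coeff_single_of_ne h, map_zero]
      rfl
  obtain ⟨M, hMτ, hMy, hMs, hMf, hMr⟩ := smallField
    (RatFunc.C.comp (HahnSeries.C : k →+* LaurentSeries k)) (σ₁.comp σ₂)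
    (by
      intro a
      rw [hmapE, RingHom.comp_apply, RingHom.comp_apply, hσ₂, hψC, hlsC]
      exact hσ₁' _)
    e₁ e₂ he₁ he₂ (σ₁ y) s RatFunc.X (RatFunc.C (HahnSeries.single (1 : ℤ) (1 : k))) u₂ c m
    (by
      rw [hmapE, hψX, ← map_pow, hy, map_mul, hσ₁']; rfl)
    (by
      rw [hmapE, hψC, hlsT, hs, map_mul, map_zpow₀]; rfl)
  refine ⟨M, inferInstance, inferInstance, hMf, tensorIso M ?_ ?_⟩
  · rw [← hr₁, ← hrκ, ← hr₂]
    exact hMr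
  · intro S hS
    refine hgen₁ S ?_ (hS _ hMs)
    let S₂ : Subalgebra (LaurentSeries k) κ₁ :=
      { S.toSubsemiring.comap σ₁ with
        algebraMap_mem' := fun a => by
          change σ₁ _ ∈ S
          rw [hσ₁']
          exact S.algebraMap_mem _ }
    have hS₂ : S₂ = ⊤ := hgen₂ S₂ (fun a => hS _ (hMτ a)) (hS _ hMy)
    intro a
    have : a ∈ S₂ := by rw [hS₂]; trivial
    exact this
end
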